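/- Let (X, σ_X) and (Y, σ_Y) be one-sided subshifts with Y a factor of X via a one-block factor map π, let a = (a_1, a_2) with a_1 > 0 and a_2 ≥ 0, and let Φ = (log φ_n)_{n=1}^∞ ∈ C_sa(X, σ_X) be generated by a sub-multiplicative φ : L(X) → [0,∞). Define φ^{(2)} : L(Y) → [0,∞) by φ^{(2)}(J) = ( Σ_{I ∈ L_n(X), πI = J} φ(I)^{1/a_1} )^{a_1} for J ∈ L_n(Y), and let Φ^{(2)} ∈ C_sa(Y, σ_Y) be generated by φ^{(2)}. Then μ ∈ I(Φ, a) if and only if μ ∘ π^{-1} ∈ I( (1/(a_1+a_2)) Φ^{(2)} ) and μ ∈ I_{μ∘π^{-1}}( (1/a_1) Φ ), where for c > 0, cΦ denotes the potential (log φ_n^c)_{n=1}^∞. -/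

import Mathlib

open MeasureTheory Filter Topology
open scoped Classical ENNReal NNReal

noncomputable section

/-- The left shift on one-sided sequences. -/
def shiftMap {A : Type} : (ℕ → A) → (ℕ → A) := fun x n => x (n + 1)

/-- The cylinder set of a finite word. -/
def cyl {A : Type} (I : List A) : Set (ℕ → A) :=
  {x | ∀ i : Fin I.length, x i = I.get i}

/-- Membership of a word in the language of `X`. -/
def Lang {A : Type} (X : Set (ℕ → A)) (I : List A) : Prop :=
  (cyl I ∩ X).Nonempty

/-- `X` is a (nonempty) one-sided subshift. -/
def IsSubshift {A : Type} [TopologicalSpace A] (X : Set (ℕ → A)) : Prop :=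
  X.Nonempty ∧ IsCompact X ∧ shiftMap '' X ⊆ X

/-- weak `p`-specification -/
def WeakSpecification {A : Type} (X : Set (ℕ → A)) (p : ℕ) : Prop :=
  ∀ I J : List A, Lang X I → Lang X J →
    ∃ K : List A, K.length ≤ p ∧ Lang X (I ++ K ++ J)

/-- `p`-specification -/
def Specification {A : Type} (X : Set (ℕ → A)) (p : ℕ) : Prop :=
  ∀ I J : List A, Lang X I → Lang X J →
    ∃ K : List A, K.length = p ∧ Lang X (I ++ K ++ J)

/-- invariant probability measures supported on `X` (predicate on plain measures) -/
def InvOn {A : Type} [MeasurableSpace A] (X : Set (ℕ → A)) (μ : Measure (ℕ → A)) : Prop :=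
  IsProbabilityMeasure μ ∧ μ.map shiftMap = μ ∧ μ X = 1

/-- the set of shift-invariant probability measures on `X` -/
def MInv {A : Type} [MeasurableSpace A] (X : Set (ℕ → A)) :
    Set (ProbabilityMeasure (ℕ → A)) :=
  {μ | (μ : Measure (ℕ → A)).map shiftMap = (μ : Measure (ℕ → A)) ∧
    (μ : Measure (ℕ → A)) X = 1}

/-- measure of a word: `μ([I] ∩ X)` -/
def mw {A : Type} [MeasurableSpace A] (X : Set (ℕ → A)) (μ : Measure (ℕ → A))
    (I : List A) : ℝ :=
  (μ (cyl I ∩ X)).toReal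

/-- the initial word of length `n` of a sequence -/
def wordOf {A : Type} (x : ℕ → A) (n : ℕ) : List A := List.ofFn (fun i : Fin n => x i)

/-- `n`-block entropy -/
def Hblock {A : Type} [Fintype A] [MeasurableSpace A] (X : Set (ℕ → A))
    (μ : Measure (ℕ → A)) (n : ℕ) : ℝ :=
  -∑ w : Fin n → A, mw X μ (List.ofFn w) * Real.log (mw X μ (List.ofFn w))

/-- measure-theoretic entropy (the limit exists for invariant measures; `liminf` realizes it) -/
def ent {A : Type} [Fintype A] [MeasurableSpace A] (X : Set (ℕ → A))
    (μ : Measure (ℕ → A)) : ℝ :=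
  liminf (fun n : ℕ => Hblock X μ n / n) atTop

/-- extended logarithm: `log t`, with value `⊥` for `t ≤ 0` -/
def elog (t : ℝ) : EReal := if t ≤ 0 then ⊥ else ((Real.log t : ℝ) : EReal)

/-- the integral `∫ log g dμ`, valued in `ℝ ∪ {−∞}` -/
def intlog {Ω : Type*} [MeasurableSpace Ω] (μ : Measure Ω) (g : Ω → ℝ) : EReal :=
  ((∫⁻ x, ENNReal.ofReal (Real.log (g x)) ∂μ : ℝ≥0∞) : EReal) -
    ((∫⁻ x, (if g x ≤ 0 then (⊤ : ℝ≥0∞) else ENNReal.ofReal (-Real.log (g x))) ∂μ : ℝ≥0∞) : EReal)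

/-- sub-additive potential `Φ = (log φ_n)_{n ≥ 1}` -/
def SubaddPot {A : Type} [TopologicalSpace A] (X : Set (ℕ → A))
    (φ : ℕ → (ℕ → A) → ℝ) : Prop :=
  (∀ n, 1 ≤ n → ContinuousOn (φ n) X) ∧
  (∀ n, 1 ≤ n → ∀ x ∈ X, 0 ≤ φ n x) ∧
  ∃ c > (0:ℝ), ∀ n m : ℕ, 1 ≤ n → 1 ≤ m → ∀ x ∈ X,
    φ (n + m) x ≤ c * φ n x * φ m (shiftMap^[n] x)

/-- `Φ_*(μ) = lim (1/n) ∫ log φ_n dμ` (realized as a `liminf` in `EReal`) -/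
def PhiStar {A : Type} [MeasurableSpace A] (μ : Measure (ℕ → A))
    (φ : ℕ → (ℕ → A) → ℝ) : EReal :=
  liminf (fun n : ℕ => (((n : ℝ)⁻¹ : ℝ) : EReal) * intlog μ (φ n)) atTop

/-- sub-multiplicative function on the language of `X` -/
def Submult {A : Type} (X : Set (ℕ → A)) (φ : List A → ℝ) : Prop :=
  (∀ I, Lang X I → 0 ≤ φ I) ∧ φ [] = 1 ∧
  ∃ c > (0:ℝ), ∀ I J : List A, Lang X (I ++ J) → φ (I ++ J) ≤ c⁻¹ * φ I * φ J

/-- the potential generated by a word function -/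
def genPot {A : Type} (φ : List A → ℝ) : ℕ → (ℕ → A) → ℝ := fun n x => φ (wordOf x n)

/-- the scaled potential `cΦ = (log φ_n^c)` -/
def scPot {Ω : Type*} (c : ℝ) (φ : ℕ → Ω → ℝ) : ℕ → Ω → ℝ := fun n x => φ n x ^ c

/-- the "pressure value" `Φ_*(μ) + h_μ` -/
def eqVal {A : Type} [Fintype A] [MeasurableSpace A] (X : Set (ℕ → A))
    (φ : ℕ → (ℕ → A) → ℝ) (μ : ProbabilityMeasure (ℕ → A)) : EReal :=
  PhiStar (μ : Measure (ℕ → A)) φ + ((ent X (μ : Measure (ℕ → A)) : ℝ) : EReal)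

/-- the set of equilibrium states of `Φ` -/
def EqSet {A : Type} [Fintype A] [MeasurableSpace A] (X : Set (ℕ → A))
    (φ : ℕ → (ℕ → A) → ℝ) : Set (ProbabilityMeasure (ℕ → A)) :=
  {μ | μ ∈ MInv X ∧ eqVal X φ μ = ⨆ η ∈ MInv X, eqVal X φ η}

/-- sequence map induced by a one-block map -/
def blockMap {A B : Type} (π : A → B) : (ℕ → A) → (ℕ → B) := fun x n => π (x n)

/-- pushforward of a probability measure under a one-block map -/
def pushM {A B : Type} [MeasurableSpace A] [MeasurableSpace B] (π : A → B)
    (μ : ProbabilityMeasure (ℕ → A)) : Measure (ℕ → B) :=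
  (μ : Measure (ℕ → A)).map (blockMap π)

/-- conditional equilibrium states of `Φ` over `ν` -/
def CondEqSet {A B : Type} [Fintype A] [MeasurableSpace A] [MeasurableSpace B]
    (X : Set (ℕ → A)) (π : A → B) (φ : ℕ → (ℕ → A) → ℝ) (ν : Measure (ℕ → B)) :
    Set (ProbabilityMeasure (ℕ → A)) :=
  {μ | μ ∈ MInv X ∧ pushM π μ = ν ∧
    eqVal X φ μ = ⨆ η ∈ {η | η ∈ MInv X ∧ pushM π η = ν}, eqVal X φ η}

/-- the projected word function `ψ(J) = Σ_{I : πI = J} φ(I)` -/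
def psiProj {A B : Type} [Fintype A] (X : Set (ℕ → A)) (π : A → B) (φ : List A → ℝ)
    (J : List B) : ℝ :=
  ∑ w : Fin J.length → A,
    if Lang X (List.ofFn w) ∧ List.map π (List.ofFn w) = J then φ (List.ofFn w) else 0

/-- `φ^{(2)}(J) = (Σ_{I : πI = J} φ(I)^{1/a₁})^{a₁}` -/
def phiTwo {A B : Type} [Fintype A] (X : Set (ℕ → A)) (π : A → B) (φ : List A → ℝ)
    (a₁ : ℝ) (J : List B) : ℝ :=
  (∑ w : Fin J.length → A,
    if Lang X (List.ofFn w) ∧ List.map π (List.ofFn w) = J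
    then φ (List.ofFn w) ^ a₁⁻¹ else 0) ^ a₁

/-- `a`-weighted pressure value for `k = 2` -/
def wVal2 {A B : Type} [Fintype A] [Fintype B] [MeasurableSpace A] [MeasurableSpace B]
    (X : Set (ℕ → A)) (Y : Set (ℕ → B)) (π : A → B) (φ : ℕ → (ℕ → A) → ℝ)
    (a₁ a₂ : ℝ) (μ : ProbabilityMeasure (ℕ → A)) : EReal :=
  PhiStar (μ : Measure (ℕ → A)) φ +
    ((a₁ * ent X (μ : Measure (ℕ → A)) + a₂ * ent Y (pushM π μ) : ℝ) : EReal)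

/-- the set of `a`-weighted equilibrium states, `k = 2` -/
def WEqSet2 {A B : Type} [Fintype A] [Fintype B] [MeasurableSpace A] [MeasurableSpace B]
    (X : Set (ℕ → A)) (Y : Set (ℕ → B)) (π : A → B) (φ : ℕ → (ℕ → A) → ℝ)
    (a₁ a₂ : ℝ) : Set (ProbabilityMeasure (ℕ → A)) :=
  {μ | μ ∈ MInv X ∧ wVal2 X Y π φ a₁ a₂ μ = ⨆ η ∈ MInv X, wVal2 X Y π φ a₁ a₂ η}

/-- convexity of a set of probability measures -/
def ConvexPM {Ω : Type*} [MeasurableSpace Ω] (S : Set (ProbabilityMeasure Ω)) : Prop :=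
  ∀ μ₁ ∈ S, ∀ μ₂ ∈ S, ∀ t : ℝ, 0 ≤ t → t ≤ 1 → ∀ μ : ProbabilityMeasure Ω,
    (μ : Measure Ω) = ENNReal.ofReal t • (μ₁ : Measure Ω) +
      ENNReal.ofReal (1 - t) • (μ₂ : Measure Ω) → μ ∈ S

/-- extreme points of a set of probability measures -/
def IsExtremePM {Ω : Type*} [MeasurableSpace Ω] (S : Set (ProbabilityMeasure Ω))
    (μ : ProbabilityMeasure Ω) : Prop :=
  μ ∈ S ∧ ∀ μ₁ ∈ S, ∀ μ₂ ∈ S, ∀ t : ℝ, 0 < t → t < 1 →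
    (μ : Measure Ω) = ENNReal.ofReal t • (μ₁ : Measure Ω) +
      ENNReal.ofReal (1 - t) • (μ₂ : Measure Ω) → μ₁ = μ₂

/-- the class `Ω_w(A*, p)` -/
def OmegaW {A : Type} [Fintype A] (p : ℕ) (f : List A → ℝ) : Prop :=
  (∀ I, 0 ≤ f I ∧ f I ≤ 1) ∧
  ∃ c > (0:ℝ),
    (∀ n : ℕ, ∑ w : Fin n → A, f (List.ofFn w) = 1) ∧
    (∀ I J : List A, ∃ K : List A, K.length ≤ p ∧ c * (f I * f J) ≤ f (I ++ K ++ J)) ∧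
    (∀ I : List A, ∃ i j : A, c * f I ≤ f (i :: I) ∧ c * f I ≤ f (I ++ [j]))

/-- the class `Ω(A*, p)` -/
def OmegaS {A : Type} [Fintype A] (p : ℕ) (f : List A → ℝ) : Prop :=
  (∀ I, 0 ≤ f I ∧ f I ≤ 1) ∧
  ∃ c > (0:ℝ),
    (∀ n : ℕ, ∑ w : Fin n → A, f (List.ofFn w) = 1) ∧
    (∀ I J : List A, ∃ K : List A, K.length = p ∧ c * (f I * f J) ≤ f (I ++ K ++ J))

/-- `f_{m,n}(I)` -/
def fmn {A : Type} [Fintype A] (f : List A → ℝ) (m n : ℕ) (I : List A) : ℝ :=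
  ∑ u : Fin m → A, ∑ v : Fin n → A, f (List.ofFn u ++ I ++ List.ofFn v)

/-- `f*(I) = sup_{m,n} f_{m,n}(I)` -/
def fstar {A : Type} [Fintype A] (f : List A → ℝ) (I : List A) : ℝ :=
  ⨆ m : ℕ, ⨆ n : ℕ, fmn f m n I

/-- the class `D_w(X, p)` -/
def Dw {A : Type} (X : Set (ℕ → A)) (p : ℕ) (φ : List A → ℝ) : Prop :=
  (∀ I, Lang X I → 0 ≤ φ I) ∧ (∃ I, Lang X I ∧ I ≠ [] ∧ 0 < φ I) ∧
  ∃ c : ℝ, 0 < c ∧ c ≤ 1 ∧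
    (∀ I J : List A, Lang X (I ++ J) → φ (I ++ J) ≤ c⁻¹ * φ I * φ J) ∧
    (∀ I J : List A, Lang X I → Lang X J →
      ∃ K : List A, K.length ≤ p ∧ Lang X (I ++ K ++ J) ∧
        c * (φ I * φ J) ≤ φ (I ++ K ++ J))

/-- the class `D(X, p)` -/
def Ds {A : Type} (X : Set (ℕ → A)) (p : ℕ) (φ : List A → ℝ) : Prop :=
  (∀ I, Lang X I → 0 ≤ φ I) ∧ (∃ I, Lang X I ∧ I ≠ [] ∧ 0 < φ I) ∧
  ∃ c : ℝ, 0 < c ∧ c ≤ 1 ∧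
    (∀ I J : List A, Lang X (I ++ J) → φ (I ++ J) ≤ c⁻¹ * φ I * φ J) ∧
    (∀ I J : List A, Lang X I → Lang X J →
      ∃ K : List A, K.length = p ∧ Lang X (I ++ K ++ J) ∧
        c * (φ I * φ J) ≤ φ (I ++ K ++ J))

end

noncomputable section

/-- iterated one-block maps along a chain of alphabets: `tauFrom π j i : B j → B (j+i)` -/
def tauFrom {B : ℕ → Type} (π : ∀ i, B i → B (i+1)) (j : ℕ) : (i : ℕ) → B j → B (j + i)
  | 0 => id
  | (i+1) => fun a => π (j + i) (tauFrom π j i a)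

/-- weighted pressure value along a chain starting at index `j`, with `k` weights `w 0, …, w (k-1)` -/
def wValGen {B : ℕ → Type} [∀ i, Fintype (B i)] [∀ i, MeasurableSpace (B i)]
    (π : ∀ i, B i → B (i+1)) (X : ∀ i, Set (ℕ → B i)) (j k : ℕ) (w : ℕ → ℝ)
    (φ : ℕ → (ℕ → B j) → ℝ) (μ : ProbabilityMeasure (ℕ → B j)) : EReal :=
  PhiStar (μ : Measure (ℕ → B j)) φ +
    ((∑ i ∈ Finset.range k, w i *
      ent (X (j + i)) ((μ : Measure (ℕ → B j)).map (blockMap (tauFrom π j i))) : ℝ) : EReal)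

/-- weighted equilibrium states along a chain -/
def wEqSetGen {B : ℕ → Type} [∀ i, Fintype (B i)] [∀ i, MeasurableSpace (B i)]
    (π : ∀ i, B i → B (i+1)) (X : ∀ i, Set (ℕ → B i)) (j k : ℕ) (w : ℕ → ℝ)
    (φ : ℕ → (ℕ → B j) → ℝ) : Set (ProbabilityMeasure (ℕ → B j)) :=
  {μ | μ ∈ MInv (X j) ∧
    wValGen π X j k w φ μ = ⨆ η ∈ MInv (X j), wValGen π X j k w φ η}

end


open MeasureTheory Filter Topology
open scoped Classical ENNReal NNReal

set_option linter.unusedSectionVars false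

section basics
variable {A : Type} [Fintype A] [TopologicalSpace A] [DiscreteTopology A] [MeasurableSpace A]
  [BorelSpace A]

lemma IsSubshift.meas {X : Set (ℕ → A)} (hX : IsSubshift X) : MeasurableSet X :=
  hX.2.1.isClosed.measurableSet

lemma mem_cyl_ofFn {A : Type} {n : ℕ} (w : Fin n → A) (x : ℕ → A) :
    x ∈ cyl (List.ofFn w) ↔ (fun i : Fin n => x i) = w := by
  unfold cyl
  simp only [Set.mem_ofPred_eq, List.get_ofFn]
  constructor
  · intro h
    funext i
    have := h ⟨i, by simp⟩
    simpa using this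
  · intro h i
    subst h
    simp

lemma wordOf_length {A : Type} (x : ℕ → A) (n : ℕ) : (wordOf x n).length = n := by
  simp [wordOf]

lemma mem_cyl_wordOf {A : Type} (x : ℕ → A) (n : ℕ) : x ∈ cyl (wordOf x n) := by
  unfold wordOf
  rw [mem_cyl_ofFn]

lemma lang_wordOf {A : Type} {X : Set (ℕ → A)} {x : ℕ → A} (hx : x ∈ X) (n : ℕ) :
    Lang X (wordOf x n) := ⟨x, mem_cyl_wordOf x n, hx⟩

lemma measurable_res (n : ℕ) : Measurable (fun (x : ℕ → A) (i : Fin n) => x i) := by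
  fun_prop

lemma mw_eq {X : Set (ℕ → A)} (hXm : MeasurableSet X) (μ : Measure (ℕ → A))
    [IsProbabilityMeasure μ] (hμ : μ X = 1) (I : List A) : mw X μ I = (μ (cyl I)).toReal := by
  unfold mw
  rw [measure_inter_conull]
  exact (prob_compl_eq_zero_iff hXm).2 hμ

lemma mw_nonneg {A : Type} [MeasurableSpace A] (X : Set (ℕ → A)) (μ : Measure (ℕ → A))
    (I : List A) : 0 ≤ mw X μ I := ENNReal.toReal_nonneg

lemma mw_pos_lang {A : Type} [MeasurableSpace A] {X : Set (ℕ → A)} {μ : Measure (ℕ → A)}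
    {I : List A} (h : 0 < mw X μ I) : Lang X I := by
  by_contra hc
  unfold Lang at hc
  rw [Set.not_nonempty_iff_eq_empty] at hc
  simp [mw, hc] at h

lemma cyl_ofFn_eq {A : Type} {n : ℕ} (w : Fin n → A) :
    cyl (List.ofFn w) = (fun (x : ℕ → A) (i : Fin n) => x i) ⁻¹' {w} := by
  ext x
  rw [mem_cyl_ofFn]
  rfl

lemma intw {X : Set (ℕ → A)} (hXm : MeasurableSet X) (μ : Measure (ℕ → A))
    [IsProbabilityMeasure μ] (hμ : μ X = 1) (n : ℕ) (F : List A → ℝ) :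
    ∫ x, F (wordOf x n) ∂μ = ∑ w : Fin n → A, mw X μ (List.ofFn w) * F (List.ofFn w) := by
  have h1 : ∫ x, F (wordOf x n) ∂μ
      = ∫ w, F (List.ofFn w) ∂(μ.map (fun (x : ℕ → A) (i : Fin n) => x i)) := by
    rw [integral_map (measurable_res n).aemeasurable]
    · rfl
    · exact (Measurable.of_discrete).aestronglyMeasurable
  have : IsProbabilityMeasure (μ.map (fun (x : ℕ → A) (i : Fin n) => x i)) :=
    Measure.isProbabilityMeasure_map (measurable_res n).aemeasurable
  rw [h1, integral_fintype (Integrable.of_finite)]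
  refine Finset.sum_congr rfl fun w _ => ?_
  rw [mw_eq hXm μ hμ, cyl_ofFn_eq, measureReal_def,
    Measure.map_apply (measurable_res n) (MeasurableSet.singleton w)]
  rfl

lemma lintw {X : Set (ℕ → A)} (hXm : MeasurableSet X) (μ : Measure (ℕ → A))
    [IsProbabilityMeasure μ] (hμ : μ X = 1) (n : ℕ) (F : List A → ℝ≥0∞) :
    ∫⁻ x, F (wordOf x n) ∂μ
      = ∑ w : Fin n → A, F (List.ofFn w) * ENNReal.ofReal (mw X μ (List.ofFn w)) := by
  have h1 : ∫⁻ x, F (wordOf x n) ∂μ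
      = ∫⁻ w, F (List.ofFn w) ∂(μ.map (fun (x : ℕ → A) (i : Fin n) => x i)) := by
    rw [lintegral_map (Measurable.of_discrete) (measurable_res n)]
    rfl
  rw [h1, lintegral_fintype]
  refine Finset.sum_congr rfl fun w _ => ?_
  rw [mw_eq hXm μ hμ, cyl_ofFn_eq, ENNReal.ofReal_toReal (measure_ne_top _ _),
    Measure.map_apply (measurable_res n) (MeasurableSet.singleton w)]

lemma sum_mw {X : Set (ℕ → A)} (hXm : MeasurableSet X) (μ : Measure (ℕ → A))
    [IsProbabilityMeasure μ] (hμ : μ X = 1) (n : ℕ) :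
    ∑ w : Fin n → A, mw X μ (List.ofFn w) = 1 := by
  have := intw hXm μ hμ n (fun _ => 1)
  simpa using this.symm

lemma ofReal_max_zero (t : ℝ) : ENNReal.ofReal t = ENNReal.ofReal (max t 0) := by
  rcases le_total 0 t with h | h
  · rw [max_eq_left h]
  · rw [max_eq_right h, ENNReal.ofReal_of_nonpos h, ENNReal.ofReal_zero]

/-- The integral of `log` at word level. -/
lemma intlog_bot {X : Set (ℕ → A)} (hXm : MeasurableSet X) (μ : Measure (ℕ → A))
    [IsProbabilityMeasure μ] (hμ : μ X = 1) (n : ℕ) (φ : List A → ℝ)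
    (h : ∃ w : Fin n → A, 0 < mw X μ (List.ofFn w) ∧ φ (List.ofFn w) ≤ 0) :
    intlog μ (genPot φ n) = ⊥ := by
  obtain ⟨w, hw, hφ⟩ := h
  unfold intlog genPot
  rw [lintw hXm μ hμ n (fun I => if φ I ≤ 0 then (⊤ : ℝ≥0∞) else ENNReal.ofReal (-Real.log (φ I)))]
  have : ∑ w : Fin n → A, (if φ (List.ofFn w) ≤ 0 then (⊤ : ℝ≥0∞)
      else ENNReal.ofReal (-Real.log (φ (List.ofFn w)))) * ENNReal.ofReal (mw X μ (List.ofFn w))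
      = ⊤ := by
    rw [ENNReal.sum_eq_top]
    refine ⟨w, Finset.mem_univ _, ?_⟩
    rw [if_pos hφ, ENNReal.top_mul]
    simpa using hw
  rw [this]
  simp [EReal.sub_top]

lemma intlog_real {X : Set (ℕ → A)} (hXm : MeasurableSet X) (μ : Measure (ℕ → A))
    [IsProbabilityMeasure μ] (hμ : μ X = 1) (n : ℕ) (φ : List A → ℝ)
    (h : ∀ w : Fin n → A, 0 < mw X μ (List.ofFn w) → 0 < φ (List.ofFn w)) :
    intlog μ (genPot φ n) =
      ((∑ w : Fin n → A, mw X μ (List.ofFn w) * Real.log (φ (List.ofFn w)) : ℝ) : EReal) := by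
  unfold intlog genPot
  rw [lintw hXm μ hμ n (fun I => if φ I ≤ 0 then (⊤ : ℝ≥0∞) else ENNReal.ofReal (-Real.log (φ I))),
    lintw hXm μ hμ n (fun I => ENNReal.ofReal (Real.log (φ I)))]
  have e1 : ∑ w : Fin n → A, ENNReal.ofReal (Real.log (φ (List.ofFn w))) *
      ENNReal.ofReal (mw X μ (List.ofFn w)) = ENNReal.ofReal (∑ w : Fin n → A,
        max (Real.log (φ (List.ofFn w))) 0 * mw X μ (List.ofFn w)) := by
    rw [ENNReal.ofReal_sum_of_nonneg]
    · refine Finset.sum_congr rfl fun w _ => ?_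
      rw [ENNReal.ofReal_mul (le_max_right _ _)]
      congr 1
      exact ofReal_max_zero _
    · intro w _
      exact mul_nonneg (le_max_right _ _) (mw_nonneg _ _ _)
  have e2 : ∑ w : Fin n → A, (if φ (List.ofFn w) ≤ 0 then (⊤ : ℝ≥0∞)
      else ENNReal.ofReal (-Real.log (φ (List.ofFn w)))) *
      ENNReal.ofReal (mw X μ (List.ofFn w)) = ENNReal.ofReal (∑ w : Fin n → A,
        max (-Real.log (φ (List.ofFn w))) 0 * mw X μ (List.ofFn w)) := by
    rw [ENNReal.ofReal_sum_of_nonneg]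
    · refine Finset.sum_congr rfl fun w _ => ?_
      rcases (mw_nonneg X μ (List.ofFn w)).eq_or_lt with h0 | h0
      · rw [← h0]; simp
      · rw [ENNReal.ofReal_mul (le_max_right _ _), if_neg (not_le.2 (h w h0))]
        congr 1
        exact ofReal_max_zero _
    · intro w _
      exact mul_nonneg (le_max_right _ _) (mw_nonneg _ _ _)
  rw [e1, e2, EReal.coe_ennreal_ofReal, EReal.coe_ennreal_ofReal, max_eq_left, max_eq_left,
    ← EReal.coe_sub, ← Finset.sum_sub_distrib]
  · congr 1
    refine Finset.sum_congr rfl fun w _ => ?_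
    rw [← sub_mul, mul_comm]
    congr 1
    rcases le_total 0 (Real.log (φ (List.ofFn w))) with h0 | h0
    · rw [max_eq_left h0, max_eq_right (by linarith)]; ring
    · rw [max_eq_right h0, max_eq_left (by linarith)]; ring
  · exact Finset.sum_nonneg fun w _ => mul_nonneg (le_max_right _ _) (mw_nonneg _ _ _)
  · exact Finset.sum_nonneg fun w _ => mul_nonneg (le_max_right _ _) (mw_nonneg _ _ _)

/-- Gibbs inequality. -/
lemma gibbs {ι : Type*} [Fintype ι] (q r : ι → ℝ) (hq : ∀ i, 0 ≤ q i) (hr : ∀ i, 0 ≤ r i)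
    (hpos : ∀ i, 0 < q i → 0 < r i) (hsum : ∑ i, r i ≤ ∑ i, q i) :
    ∑ i, q i * Real.log (r i) ≤ ∑ i, q i * Real.log (q i) := by
  have key : ∀ i, q i * Real.log (r i) - q i * Real.log (q i) ≤ r i - q i := by
    intro i
    rcases (hq i).eq_or_lt with h | h
    · rw [← h]; simp [hr i]
    · have hri := hpos i h
      have := Real.log_le_sub_one_of_pos (div_pos hri h)
      rw [Real.log_div hri.ne' h.ne'] at this
      have h2 := mul_le_mul_of_nonneg_left this h.le
      have h3 : q i * (r i / q i - 1) = r i - q i := by field_simp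
      linarith
  have := Finset.sum_le_sum fun i (_ : i ∈ Finset.univ) => key i
  rw [Finset.sum_sub_distrib, Finset.sum_sub_distrib] at this
  linarith

lemma sum_take_drop {A : Type} [Fintype A] (a b : ℕ) (f g : List A → ℝ) :
    ∑ w : Fin (a + b) → A, f ((List.ofFn w).take a) * g ((List.ofFn w).drop a)
      = (∑ u : Fin a → A, f (List.ofFn u)) * ∑ v : Fin b → A, g (List.ofFn v) := by
  rw [← (Fin.appendEquiv a b).sum_comp, Fintype.sum_prod_type, Finset.sum_mul_sum]
  refine Finset.sum_congr rfl fun u _ => Finset.sum_congr rfl fun v _ => ?_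
  have : List.ofFn (Fin.appendEquiv a b (u, v)) = List.ofFn u ++ List.ofFn v := by
    simp [Fin.appendEquiv, List.ofFn_fin_append]
  rw [this, List.take_left' (by simp), List.drop_left' (by simp)]

lemma shift_iter {A : Type} (k : ℕ) (x : ℕ → A) (i : ℕ) : (shiftMap^[k] x) i = x (i + k) := by
  induction k generalizing x with
  | zero => rfl
  | succ k ih => rw [Function.iterate_succ_apply, ih]; simp [shiftMap]; ring_nf

lemma shift_iter_mem {A : Type} [TopologicalSpace A] {X : Set (ℕ → A)} (hX : IsSubshift X)
    {x : ℕ → A} (hx : x ∈ X) (k : ℕ) : shiftMap^[k] x ∈ X := by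
  induction k generalizing x with
  | zero => exact hx
  | succ k ih => rw [Function.iterate_succ_apply]; exact ih (hX.2.2 ⟨x, hx, rfl⟩)

lemma wordOf_add {A : Type} (x : ℕ → A) (a b : ℕ) :
    wordOf x (a + b) = wordOf x a ++ wordOf (shiftMap^[a] x) b := by
  apply List.ext_getElem
  · simp [wordOf]
  · intro i h1 h2
    simp only [wordOf, List.getElem_ofFn, List.getElem_append, List.length_ofFn, shift_iter]
    split_ifs with h
    · rfl
    · congr 1; omega

lemma wordOf_take {A : Type} (x : ℕ → A) (a b : ℕ) : (wordOf x (a + b)).take a = wordOf x a := by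
  rw [wordOf_add, List.take_left' (wordOf_length _ _)]

lemma wordOf_drop {A : Type} (x : ℕ → A) (a b : ℕ) :
    (wordOf x (a + b)).drop a = wordOf (shiftMap^[a] x) b := by
  rw [wordOf_add, List.drop_left' (wordOf_length _ _)]

lemma measurable_shift {A : Type} [MeasurableSpace A] :
    Measurable (shiftMap : (ℕ → A) → (ℕ → A)) := by
  unfold shiftMap; fun_prop

lemma measurable_shift_iter {A : Type} [MeasurableSpace A] (k : ℕ) :
    Measurable (shiftMap^[k] : (ℕ → A) → (ℕ → A)) := measurable_shift.iterate k

lemma measurable_wordFun (n : ℕ) (F : List A → ℝ) : Measurable (fun x : ℕ → A => F (wordOf x n)) :=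
  (Measurable.of_discrete (f := fun w : Fin n → A => F (List.ofFn w))).comp (measurable_res n)

lemma int_shift {μ : Measure (ℕ → A)} (hμ : μ.map shiftMap = μ) (k n : ℕ) (F : List A → ℝ) :
    ∫ x, F (wordOf (shiftMap^[k] x) n) ∂μ = ∫ x, F (wordOf x n) ∂μ := by
  have hk : μ.map (shiftMap^[k]) = μ := by
    induction k with
    | zero => exact Measure.map_id
    | succ k ih =>
      rw [Function.iterate_succ, ← Measure.map_map (measurable_shift_iter k) measurable_shift,
        hμ, ih]
  conv_rhs => rw [← hk]
  rw [integral_map (measurable_shift_iter k).aemeasurable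
    (measurable_wordFun n F).aestronglyMeasurable]

lemma mem_cyl_iff {A : Type} (x : ℕ → A) (I : List A) : x ∈ cyl I ↔ wordOf x I.length = I := by
  constructor
  · intro h
    apply List.ext_getElem
    · simp [wordOf]
    · intro i h1 h2
      have := h ⟨i, h2⟩
      simpa [wordOf] using this
  · intro h
    rw [← h]
    exact mem_cyl_wordOf x _

lemma mem_cyl_append {A : Type} (x : ℕ → A) (I J : List A) :
    x ∈ cyl (I ++ J) ↔ x ∈ cyl I ∧ shiftMap^[I.length] x ∈ cyl J := by
  rw [mem_cyl_iff, mem_cyl_iff, mem_cyl_iff, List.length_append, wordOf_add]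
  constructor
  · intro h
    exact List.append_inj h (wordOf_length _ _)
  · rintro ⟨h1, h2⟩
    rw [h1, h2]

lemma measurableSet_cyl (I : List A) : MeasurableSet (cyl I) := by
  have : I = List.ofFn I.get := by simp
  rw [this, cyl_ofFn_eq]
  exact measurable_res _ (MeasurableSet.singleton _)

lemma map_shift_iter {A : Type} [MeasurableSpace A] {μ : Measure (ℕ → A)}
    (hμ : μ.map shiftMap = μ) (k : ℕ) : μ.map (shiftMap^[k]) = μ := by
  induction k with
  | zero => exact Measure.map_id
  | succ k ih =>
    rw [Function.iterate_succ, ← Measure.map_map (measurable_shift_iter k) measurable_shift,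
      hμ, ih]

lemma mw_append_left {X : Set (ℕ → A)} (hXm : MeasurableSet X) (μ : Measure (ℕ → A))
    [IsProbabilityMeasure μ] (hμ : μ X = 1) (I J : List A) : mw X μ (I ++ J) ≤ mw X μ I := by
  rw [mw_eq hXm μ hμ, mw_eq hXm μ hμ]
  apply ENNReal.toReal_mono (measure_ne_top _ _)
  apply measure_mono
  intro x hx
  exact ((mem_cyl_append x I J).1 hx).1

lemma mw_append_right {X : Set (ℕ → A)} (hXm : MeasurableSet X) (μ : Measure (ℕ → A))
    [IsProbabilityMeasure μ] (hμ : μ X = 1) (hinv : μ.map shiftMap = μ) (I J : List A) :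
    mw X μ (I ++ J) ≤ mw X μ J := by
  rw [mw_eq hXm μ hμ, mw_eq hXm μ hμ]
  apply ENNReal.toReal_mono (measure_ne_top _ _)
  conv_rhs => rw [← map_shift_iter hinv I.length]
  rw [Measure.map_apply (measurable_shift_iter _) (measurableSet_cyl _)]
  apply measure_mono
  intro x hx
  exact ((mem_cyl_append x I J).1 hx).2

lemma hblock_subadd {X : Set (ℕ → A)} (hXm : MeasurableSet X) (μ : Measure (ℕ → A))
    [IsProbabilityMeasure μ] (hμ : μ X = 1) (hinv : μ.map shiftMap = μ) (a b : ℕ) :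
    Hblock X μ (a + b) ≤ Hblock X μ a + Hblock X μ b := by
  have hg := gibbs (fun w : Fin (a + b) → A => mw X μ (List.ofFn w))
    (fun w => mw X μ ((List.ofFn w).take a) * mw X μ ((List.ofFn w).drop a))
    (fun w => mw_nonneg _ _ _) (fun w => mul_nonneg (mw_nonneg _ _ _) (mw_nonneg _ _ _)) ?_ ?_
  rotate_left
  · intro w hw
    rw [← List.take_append_drop a (List.ofFn w)] at hw
    exact mul_pos (hw.trans_le (mw_append_left hXm μ hμ _ _))
      (hw.trans_le (mw_append_right hXm μ hμ hinv _ _))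
  · rw [sum_take_drop a b (mw X μ) (mw X μ), sum_mw hXm μ hμ, sum_mw hXm μ hμ, sum_mw hXm μ hμ]
    norm_num
  have h1 : ∑ w : Fin (a + b) → A, mw X μ (List.ofFn w) *
      Real.log (mw X μ ((List.ofFn w).take a)) = - Hblock X μ a := by
    rw [← intw hXm μ hμ (a + b) (fun I => Real.log (mw X μ (I.take a)))]
    simp only [wordOf_take]
    rw [intw hXm μ hμ a (fun I => Real.log (mw X μ I))]
    simp [Hblock]
  have h2 : ∑ w : Fin (a + b) → A, mw X μ (List.ofFn w) *
      Real.log (mw X μ ((List.ofFn w).drop a)) = - Hblock X μ b := by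
    rw [← intw hXm μ hμ (a + b) (fun I => Real.log (mw X μ (I.drop a)))]
    simp only [wordOf_drop]
    rw [int_shift hinv a b (fun I => Real.log (mw X μ I)),
      intw hXm μ hμ b (fun I => Real.log (mw X μ I))]
    simp [Hblock]
  have h3 : ∑ w : Fin (a + b) → A, mw X μ (List.ofFn w) *
      Real.log (mw X μ ((List.ofFn w).take a) * mw X μ ((List.ofFn w).drop a))
      = - Hblock X μ a - Hblock X μ b := by
    rw [← h1, sub_eq_add_neg, ← h2, ← Finset.sum_add_distrib]
    refine Finset.sum_congr rfl fun w _ => ?_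
    rcases (mw_nonneg X μ (List.ofFn w)).eq_or_lt with h0 | h0
    · rw [← h0]; simp
    · rw [← List.take_append_drop a (List.ofFn w)] at h0
      rw [Real.log_mul (h0.trans_le (mw_append_left hXm μ hμ _ _)).ne'
        (h0.trans_le (mw_append_right hXm μ hμ hinv _ _)).ne']
      ring
  have h4 : ∑ w : Fin (a + b) → A, mw X μ (List.ofFn w) * Real.log (mw X μ (List.ofFn w))
      = - Hblock X μ (a + b) := by simp [Hblock]
  linarith

lemma mw_le_one {X : Set (ℕ → A)} (hXm : MeasurableSet X) (μ : Measure (ℕ → A))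
    [IsProbabilityMeasure μ] (hμ : μ X = 1) (I : List A) : mw X μ I ≤ 1 := by
  rw [mw_eq hXm μ hμ]
  exact measureReal_le_one

lemma hblock_nonneg {X : Set (ℕ → A)} (hXm : MeasurableSet X) (μ : Measure (ℕ → A))
    [IsProbabilityMeasure μ] (hμ : μ X = 1) (n : ℕ) : 0 ≤ Hblock X μ n := by
  unfold Hblock
  rw [Left.nonneg_neg_iff]
  exact Finset.sum_nonpos fun w _ => mul_nonpos_of_nonneg_of_nonpos (mw_nonneg _ _ _)
    (Real.log_nonpos (mw_nonneg _ _ _) (mw_le_one hXm μ hμ _))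

lemma ent_tendsto {X : Set (ℕ → A)} (hXm : MeasurableSet X) (μ : Measure (ℕ → A))
    [IsProbabilityMeasure μ] (hμ : μ X = 1) (hinv : μ.map shiftMap = μ) :
    Tendsto (fun n : ℕ => Hblock X μ n / n) atTop (𝓝 (ent X μ)) := by
  have hs : Subadditive (fun n => Hblock X μ n) := hblock_subadd hXm μ hμ hinv
  have := hs.tendsto_lim ⟨0, by
    rintro _ ⟨n, rfl⟩
    exact div_nonneg (hblock_nonneg hXm μ hμ n) (Nat.cast_nonneg n)⟩
  unfold ent
  rw [this.liminf_eq]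
  exact this

end basics

open MeasureTheory Filter Topology
open scoped Classical ENNReal NNReal
set_option linter.unusedSectionVars false

section factor
variable {A : Type} [Fintype A] [TopologicalSpace A] [DiscreteTopology A] [MeasurableSpace A]
  [BorelSpace A]
variable {B : Type} [Fintype B] [TopologicalSpace B] [DiscreteTopology B] [MeasurableSpace B]
  [BorelSpace B]

lemma measurable_blockMap (π : A → B) : Measurable (blockMap π) := by
  unfold blockMap
  have : Measurable π := Measurable.of_discrete
  fun_prop

lemma blockMap_shift {A B : Type} (π : A → B) (x : ℕ → A) :
    blockMap π (shiftMap x) = shiftMap (blockMap π x) := rfl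

lemma blockMap_shift_iter {A B : Type} (π : A → B) (k : ℕ) (x : ℕ → A) :
    blockMap π (shiftMap^[k] x) = shiftMap^[k] (blockMap π x) := by
  funext i
  simp [blockMap, shift_iter]

lemma wordOf_blockMap {A B : Type} (π : A → B) (x : ℕ → A) (n : ℕ) :
    wordOf (blockMap π x) n = (wordOf x n).map π := by
  simp [wordOf, List.map_ofFn, blockMap, Function.comp_def]

lemma pushM_prob (π : A → B) (μ : ProbabilityMeasure (ℕ → A)) :
    IsProbabilityMeasure (pushM π μ) :=
  Measure.isProbabilityMeasure_map (measurable_blockMap π).aemeasurable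

lemma pushM_full {X : Set (ℕ → A)} {Y : Set (ℕ → B)} (hYm : MeasurableSet Y)
    {π : A → B} (hπ : blockMap π '' X = Y) {μ : ProbabilityMeasure (ℕ → A)} (hμ : μ ∈ MInv X) :
    pushM π μ Y = 1 := by
  have := pushM_prob π μ
  refine le_antisymm prob_le_one ?_
  unfold pushM
  rw [Measure.map_apply (measurable_blockMap π) hYm, ← hμ.2]
  apply measure_mono
  rw [← hπ]
  exact Set.subset_preimage_image _ _

lemma pushM_inv {X : Set (ℕ → A)} 
    {π : A → B} {μ : ProbabilityMeasure (ℕ → A)} (hμ : μ ∈ MInv X) :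
    (pushM π μ).map shiftMap = pushM π μ := by
  unfold pushM
  rw [Measure.map_map measurable_shift (measurable_blockMap π)]
  conv_rhs => rw [← hμ.1]
  rw [Measure.map_map (measurable_blockMap π) measurable_shift]
  rfl

lemma factor_sum {X : Set (ℕ → A)} {Y : Set (ℕ → B)} (hXm : MeasurableSet X) (hYm : MeasurableSet Y)
    {π : A → B} (hπ : blockMap π '' X = Y) {μ : ProbabilityMeasure (ℕ → A)} (hμ : μ ∈ MInv X)
    (n : ℕ) (F : List B → ℝ) :
    ∑ w : Fin n → A, mw X μ (List.ofFn w) * F ((List.ofFn w).map π)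
      = ∑ J : Fin n → B, mw Y (pushM π μ) (List.ofFn J) * F (List.ofFn J) := by
  have := pushM_prob π μ
  rw [← intw hYm _ (pushM_full hYm hπ hμ) n F, ← intw hXm μ hμ.2 n (fun I => F (I.map π))]
  unfold pushM
  rw [integral_map (measurable_blockMap π).aemeasurable
    (measurable_wordFun n F).aestronglyMeasurable]
  simp only [wordOf_blockMap]

lemma psiProj_eq {A B : Type} [Fintype A] (X : Set (ℕ → A)) (π : A → B) (φ : List A → ℝ) (n : ℕ)
    (J : List B) (hJ : J.length = n) :
    psiProj X π φ J = ∑ w : Fin n → A,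
      if Lang X (List.ofFn w) ∧ List.map π (List.ofFn w) = J then φ (List.ofFn w) else 0 := by
  subst hJ
  rfl

lemma psiProj_ge {A B : Type} [Fintype A] {X : Set (ℕ → A)} (π : A → B) {φ : List A → ℝ}
    (hφ : ∀ I, Lang X I → 0 ≤ φ I) {n : ℕ} (w : Fin n → A) (hw : Lang X (List.ofFn w)) :
    φ (List.ofFn w) ≤ psiProj X π φ ((List.ofFn w).map π) := by
  rw [psiProj_eq X π φ n _ (by simp)]
  refine le_trans ?_ (Finset.single_le_sum (s := Finset.univ) (a := w) ?_ (Finset.mem_univ w))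
  · rw [if_pos ⟨hw, rfl⟩]
  · intro u _
    split_ifs with h
    · exact hφ _ h.1
    · exact le_rfl

lemma psiProj_nonneg {A B : Type} [Fintype A] {X : Set (ℕ → A)} (π : A → B) {φ : List A → ℝ}
    (hφ : ∀ I, Lang X I → 0 ≤ φ I) (J : List B) : 0 ≤ psiProj X π φ J := by
  unfold psiProj
  refine Finset.sum_nonneg fun u _ => ?_
  split_ifs with h
  · exact hφ _ h.1
  · exact le_rfl

/-- the distribution on words over `ν`, weighted by `φ`. -/
noncomputable def qd {A B : Type} [Fintype A] (X : Set (ℕ → A)) (π : A → B) (φ : List A → ℝ)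
    (N : List B → ℝ) (I : List A) : ℝ :=
  if Lang X I then N (I.map π) * (φ I / psiProj X π φ (I.map π)) else 0

lemma qd_sum {X : Set (ℕ → A)} (π : A → B) (φ : List A → ℝ)
    (N : List B → ℝ) (n : ℕ)
    (hN : ∀ J : Fin n → B, N (List.ofFn J) ≠ 0 → psiProj X π φ (List.ofFn J) ≠ 0)
    (F : List B → ℝ) :
    ∑ w : Fin n → A, qd X π φ N (List.ofFn w) * F ((List.ofFn w).map π)
      = ∑ J : Fin n → B, N (List.ofFn J) * F (List.ofFn J) := by
  have h1 : ∀ w : Fin n → A, qd X π φ N (List.ofFn w) * F ((List.ofFn w).map π)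
      = ∑ J : Fin n → B, if (List.ofFn w).map π = List.ofFn J then
        qd X π φ N (List.ofFn w) * F ((List.ofFn w).map π) else 0 := by
    intro w
    have : ∀ J : Fin n → B, ((List.ofFn w).map π = List.ofFn J) ↔ (π ∘ w = J) := by
      intro J
      rw [List.map_ofFn]
      exact List.ofFn_injective.eq_iff
    simp only [this, Finset.sum_ite_eq, Finset.mem_univ, if_true]
  rw [Finset.sum_congr rfl fun w _ => h1 w, Finset.sum_comm]
  refine Finset.sum_congr rfl fun J _ => ?_
  by_cases hJ : N (List.ofFn J) = 0
  · rw [hJ, zero_mul]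
    refine Finset.sum_eq_zero fun w _ => ?_
    split_ifs with h
    · unfold qd
      rw [h, hJ]; simp
    · rfl
  · have hψ := hN J hJ
    have : ∀ w : Fin n → A, (if (List.ofFn w).map π = List.ofFn J then
        qd X π φ N (List.ofFn w) * F ((List.ofFn w).map π) else 0)
        = (if Lang X (List.ofFn w) ∧ List.map π (List.ofFn w) = List.ofFn J
          then φ (List.ofFn w) else 0) *
          (N (List.ofFn J) * F (List.ofFn J) / psiProj X π φ (List.ofFn J)) := by
      intro w
      unfold qd
      by_cases h : (List.ofFn w).map π = List.ofFn J
      · by_cases h' : Lang X (List.ofFn w)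
        · rw [if_pos h, if_pos h', if_pos ⟨h', h⟩, h]; ring
        · simp [h']
      · rw [if_neg h, if_neg (fun hh => h hh.2), zero_mul]
    rw [Finset.sum_congr rfl fun w _ => this w, ← Finset.sum_mul,
      ← psiProj_eq X π φ n (List.ofFn J) (by simp)]
    field_simp

lemma qd_nonneg {A B : Type} [Fintype A] {X : Set (ℕ → A)} (π : A → B) {φ : List A → ℝ}
    (hφ : ∀ I, Lang X I → 0 ≤ φ I) {N : List B → ℝ} (hN : ∀ J, 0 ≤ N J) (I : List A) :
    0 ≤ qd X π φ N I := by
  unfold qd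
  split_ifs with h
  · exact mul_nonneg (hN _) (div_nonneg (hφ _ h) (psiProj_nonneg π hφ _))
  · exact le_rfl

lemma upper_n {X : Set (ℕ → A)} {Y : Set (ℕ → B)} (hXm : MeasurableSet X) (hYm : MeasurableSet Y)
    {π : A → B} (hπ : blockMap π '' X = Y) {φ : List A → ℝ} (hφ : ∀ I, Lang X I → 0 ≤ φ I)
    {μ : ProbabilityMeasure (ℕ → A)} (hμ : μ ∈ MInv X) (n : ℕ) :
    intlog (μ : Measure (ℕ → A)) (genPot φ n) + ((Hblock X μ n : ℝ) : EReal) ≤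
      intlog (pushM π μ) (genPot (psiProj X π φ) n) + ((Hblock Y (pushM π μ) n : ℝ) : EReal) := by
  have hp := pushM_prob π μ
  have hf := pushM_full hYm hπ hμ
  by_cases hb : ∃ w : Fin n → A, 0 < mw X μ (List.ofFn w) ∧ φ (List.ofFn w) ≤ 0
  · rw [intlog_bot hXm μ hμ.2 n φ hb]; simp
  push Not at hb
  have hν : ∀ w : Fin n → A, 0 < mw X μ (List.ofFn w) →
      0 < mw Y (pushM π μ) ((List.ofFn w).map π) := by
    intro w hw
    refine hw.trans_le ?_
    rw [mw_eq hXm μ hμ.2, mw_eq hYm _ hf]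
    unfold pushM
    rw [Measure.map_apply (measurable_blockMap π) (measurableSet_cyl _)]
    apply ENNReal.toReal_mono (measure_ne_top _ _)
    apply measure_mono
    intro x hx
    rw [Set.mem_preimage, mem_cyl_iff, wordOf_blockMap, List.length_map, (mem_cyl_iff _ _).1 hx]
  have hψ : ∀ J : Fin n → B, 0 < mw Y (pushM π μ) (List.ofFn J) →
      0 < psiProj X π φ (List.ofFn J) := by
    intro J hJ
    by_contra hc
    have h0 : psiProj X π φ (List.ofFn J) = 0 := le_antisymm (not_lt.1 hc) (psiProj_nonneg π hφ _)
    have := factor_sum hXm hYm hπ hμ n (fun I => if I = List.ofFn J then 1 else 0)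
    have e : ∀ J' : Fin n → B, (List.ofFn J' = List.ofFn J) ↔ J' = J := fun J' =>
      List.ofFn_injective.eq_iff
    simp only [mul_ite, mul_one, mul_zero, e, Finset.sum_ite_eq', Finset.mem_univ, if_true] at this
    rw [← this] at hJ
    obtain ⟨w, _, hw⟩ := Finset.exists_lt_of_sum_lt (s := Finset.univ) (f := fun _ => (0:ℝ))
      (by simpa only [Finset.sum_const_zero] using hJ)
    split_ifs at hw with hh
    · have h1 := hb w hw
      have h2 := psiProj_ge π hφ w (mw_pos_lang hw)
      rw [hh, h0] at h2
      linarith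
    · exact lt_irrefl _ hw
  rw [intlog_real hXm μ hμ.2 n φ hb, intlog_real hYm _ hf n _ hψ, ← EReal.coe_add, ← EReal.coe_add,
    EReal.coe_le_coe_iff]
  have hN : ∀ J : Fin n → B, mw Y (pushM π μ) (List.ofFn J) ≠ 0 →
      psiProj X π φ (List.ofFn J) ≠ 0 := fun J hJ =>
    (hψ J (lt_of_le_of_ne (mw_nonneg _ _ _) hJ.symm)).ne'
  have hpsi : ∀ w : Fin n → A, 0 < mw X μ (List.ofFn w) →
      0 < psiProj X π φ ((List.ofFn w).map π) := fun w hw =>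
    (hb w hw).trans_le (psiProj_ge π hφ w (mw_pos_lang hw))
  have hg := gibbs (fun w : Fin n → A => mw X μ (List.ofFn w))
    (fun w => qd X π φ (mw Y (pushM π μ)) (List.ofFn w))
    (fun w => mw_nonneg _ _ _) (fun w => qd_nonneg π hφ (fun J => mw_nonneg _ _ _) _) ?_ ?_
  · have h1 : ∀ w : Fin n → A, mw X μ (List.ofFn w) *
        Real.log (qd X π φ (mw Y (pushM π μ)) (List.ofFn w))
        = mw X μ (List.ofFn w) * Real.log (φ (List.ofFn w)) + mw X μ (List.ofFn w) *
          (fun J => Real.log (mw Y (pushM π μ) J) - Real.log (psiProj X π φ J))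
            ((List.ofFn w).map π) := by
      intro w
      rcases (mw_nonneg X μ (List.ofFn w)).eq_or_lt with h0 | h0
      · rw [← h0]; simp
      · rw [qd, if_pos (mw_pos_lang h0), Real.log_mul (hν w h0).ne'
          (div_pos (hb w h0) (hpsi w h0)).ne', Real.log_div (hb w h0).ne' (hpsi w h0).ne']
        ring
    rw [Finset.sum_congr rfl fun w _ => h1 w, Finset.sum_add_distrib,
      factor_sum hXm hYm hπ hμ n
        (fun J => Real.log (mw Y (pushM π μ) J) - Real.log (psiProj X π φ J))] at hg
    simp only [mul_sub, Finset.sum_sub_distrib] at hg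
    unfold Hblock
    linarith
  · intro w hw
    rw [qd, if_pos (mw_pos_lang hw)]
    exact mul_pos (hν w hw) (div_pos (hb w hw) (hpsi w hw))
  · have := qd_sum π φ (mw Y (pushM π μ)) n hN (fun _ => 1)
    simp only [mul_one] at this
    rw [this, sum_mw hYm _ hf, sum_mw hXm μ hμ.2]

lemma liminf_add_tendsto (a : ℕ → EReal) (b : ℕ → ℝ) (β : ℝ) (hb : Tendsto b atTop (𝓝 β)) :
    liminf (fun n => a n + (b n : EReal)) atTop = liminf a atTop + (β : EReal) := by
  have hb' : Tendsto (fun n => (b n : EReal)) atTop (𝓝 (β : EReal)) :=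
    (continuous_coe_real_ereal.tendsto β).comp hb
  apply le_antisymm
  · have := EReal.liminf_add_le (f := atTop) (u := fun n => (b n : EReal)) (v := a)
      (by rw [hb'.limsup_eq]; simp) (by rw [hb'.limsup_eq]; simp)
    rw [hb'.limsup_eq] at this
    rw [add_comm]
    refine le_trans (le_of_eq ?_) this
    congr 1
    funext n
    exact add_comm _ _
  · have := EReal.le_liminf_add (f := atTop) (u := a) (v := fun n => (b n : EReal))
    rw [hb'.liminf_eq] at this
    exact this

lemma eqVal_eq {X : Set (ℕ → A)} (hXm : MeasurableSet X) (φ : ℕ → (ℕ → A) → ℝ)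
    {μ : ProbabilityMeasure (ℕ → A)} (hμ : μ ∈ MInv X) :
    eqVal X φ μ = liminf (fun n : ℕ => (((n : ℝ)⁻¹ : ℝ) : EReal) *
      (intlog (μ : Measure (ℕ → A)) (φ n) + ((Hblock X μ n : ℝ) : EReal))) atTop := by
  unfold eqVal PhiStar
  rw [← liminf_add_tendsto _ _ _ (ent_tendsto hXm μ hμ.2 hμ.1)]
  congr 1
  funext n
  rw [EReal.left_distrib_of_nonneg_of_ne_top (EReal.coe_nonneg.2 (by positivity))
    (EReal.coe_ne_top _), ← EReal.coe_mul, div_eq_inv_mul]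

lemma upper {X : Set (ℕ → A)} {Y : Set (ℕ → B)} (hXm : MeasurableSet X) (hYm : MeasurableSet Y)
    {π : A → B} (hπ : blockMap π '' X = Y) {φ : List A → ℝ} (hφ : ∀ I, Lang X I → 0 ≤ φ I)
    {μ : ProbabilityMeasure (ℕ → A)} (hμ : μ ∈ MInv X)
    {ν : ProbabilityMeasure (ℕ → B)} (hν : ν ∈ MInv Y) (hμν : pushM π μ = ν) :
    eqVal X (genPot φ) μ ≤ eqVal Y (genPot (psiProj X π φ)) ν := by
  rw [eqVal_eq hXm _ hμ, eqVal_eq hYm _ hν, ← hμν]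
  refine liminf_le_liminf (Eventually.of_forall fun n => ?_)
  exact mul_le_mul_of_nonneg_left (upper_n hXm hYm hπ hφ hμ n) (EReal.coe_nonneg.2 (by positivity))

end factor

open MeasureTheory Filter Topology
open scoped Classical ENNReal NNReal
set_option linter.unusedSectionVars false

section lower
variable {A : Type} [Fintype A] [TopologicalSpace A] [DiscreteTopology A] [MeasurableSpace A]
  [BorelSpace A]
variable {B : Type} [Fintype B] [TopologicalSpace B] [DiscreteTopology B] [MeasurableSpace B]
  [BorelSpace B]

lemma submult_bound {X : Set (ℕ → A)} (hX : IsSubshift X) {φ : List A → ℝ} (hφ : Submult X φ) :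
    ∃ K : ℝ, 1 ≤ K ∧ (∀ x ∈ X, ∀ a b : ℕ, φ (wordOf x (a + b)) ≤
      K * (φ (wordOf x a) * φ (wordOf (shiftMap^[a] x) b))) ∧
      ∀ x ∈ X, ∀ n : ℕ, φ (wordOf x n) ≤ K ^ n := by
  obtain ⟨h0, h1, c, hc, hsub⟩ := hφ
  set K := max 1 (max c⁻¹ (∑ a : A, |φ [a]|)) with hK
  have hK1 : 1 ≤ K := le_max_left _ _
  have hKc : c⁻¹ ≤ K := (le_max_left _ _).trans (le_max_right _ _)
  have hKa : ∀ a, φ [a] ≤ K := fun a => (le_abs_self _).trans <|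
    (Finset.single_le_sum (f := fun a => |φ [a]|) (fun i _ => abs_nonneg _)
      (Finset.mem_univ a)).trans <| (le_max_right _ _).trans (le_max_right _ _)
  have hs : ∀ x ∈ X, ∀ a b : ℕ, φ (wordOf x (a + b)) ≤
      K * (φ (wordOf x a) * φ (wordOf (shiftMap^[a] x) b)) := by
    intro x hx a b
    have := hsub (wordOf x a) (wordOf (shiftMap^[a] x) b)
      (by rw [← wordOf_add]; exact lang_wordOf hx _)
    rw [← wordOf_add, mul_assoc] at this
    exact this.trans (mul_le_mul_of_nonneg_right hKc (mul_nonneg (h0 _ (lang_wordOf hx _))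
      (h0 _ (lang_wordOf (shift_iter_mem hX hx _) _))))
  have hKK : K ≤ K ^ 2 := by nlinarith
  refine ⟨K ^ 2, by nlinarith, ?_, ?_⟩
  · intro x hx a b
    exact (hs x hx a b).trans (mul_le_mul_of_nonneg_right hKK (mul_nonneg (h0 _ (lang_wordOf hx _))
      (h0 _ (lang_wordOf (shift_iter_mem hX hx _) _))))
  · intro x hx n
    induction n with
    | zero => simp [wordOf, h1]
    | succ n ih =>
      refine (hs x hx n 1).trans ?_
      have e : wordOf (shiftMap^[n] x) 1 = [(shiftMap^[n] x) 0] := by simp [wordOf]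
      rw [e]
      have h2 := hKa ((shiftMap^[n] x) 0)
      have h3 : 0 ≤ φ [(shiftMap^[n] x) 0] := by
        rw [← e]; exact h0 _ (lang_wordOf (shift_iter_mem hX hx _) _)
      calc K * (φ (wordOf x n) * φ [(shiftMap^[n] x) 0])
          ≤ K * ((K ^ 2) ^ n * K) := by
            apply mul_le_mul_of_nonneg_left _ (by linarith)
            exact mul_le_mul ih h2 h3 (by positivity)
        _ = (K ^ 2) ^ (n + 1) := by ring

lemma shift_iter_add {A : Type} (a b : ℕ) (x : ℕ → A) :
    shiftMap^[a] (shiftMap^[b] x) = shiftMap^[b + a] x := by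
  funext i
  simp only [shift_iter]
  congr 1; omega

/-- positivity and log bound for a concatenation. -/
lemma log_two {X : Set (ℕ → A)} (hX : IsSubshift X) {φ : List A → ℝ}
    (h0 : ∀ I, Lang X I → 0 ≤ φ I) {K : ℝ} (hK : 1 ≤ K)
    (hs : ∀ x ∈ X, ∀ a b : ℕ, φ (wordOf x (a + b)) ≤
      K * (φ (wordOf x a) * φ (wordOf (shiftMap^[a] x) b))) {x : ℕ → A} (hx : x ∈ X) (a b : ℕ)
    (hpos : 0 < φ (wordOf x (a + b))) :
    0 < φ (wordOf x a) ∧ 0 < φ (wordOf (shiftMap^[a] x) b) ∧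
      Real.log (φ (wordOf x (a + b))) ≤ Real.log K + (Real.log (φ (wordOf x a)) +
        Real.log (φ (wordOf (shiftMap^[a] x) b))) := by
  have h := hs x hx a b
  have ha := h0 _ (lang_wordOf hx a)
  have hb := h0 _ (lang_wordOf (shift_iter_mem hX hx a) b)
  have ha' : 0 < φ (wordOf x a) := by
    rcases ha.eq_or_lt with h1 | h1
    · rw [← h1] at h; simp at h; linarith
    · exact h1
  have hb' : 0 < φ (wordOf (shiftMap^[a] x) b) := by
    rcases hb.eq_or_lt with h1 | h1
    · rw [← h1] at h; simp at h; linarith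
    · exact h1
  refine ⟨ha', hb', ?_⟩
  rw [← Real.log_mul ha'.ne' hb'.ne', ← Real.log_mul (by linarith) (by positivity)]
  exact Real.log_le_log hpos h

lemma log_chain {X : Set (ℕ → A)} (hX : IsSubshift X) {φ : List A → ℝ}
    (h0 : ∀ I, Lang X I → 0 ≤ φ I) {K : ℝ} (hK : 1 ≤ K)
    (hs : ∀ x ∈ X, ∀ a b : ℕ, φ (wordOf x (a + b)) ≤
      K * (φ (wordOf x a) * φ (wordOf (shiftMap^[a] x) b)))
    (hb : ∀ x ∈ X, ∀ n : ℕ, φ (wordOf x n) ≤ K ^ n) (m N rest : ℕ) {x : ℕ → A} (hx : x ∈ X)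
    (hpos : 0 < φ (wordOf x (N * m + rest))) :
    Real.log (φ (wordOf x (N * m + rest))) ≤
      ∑ i ∈ Finset.range N, Real.log (φ (wordOf (shiftMap^[i * m] x) m))
        + N * Real.log K + rest * Real.log K := by
  induction N generalizing x with
  | zero =>
    simp only [Nat.zero_mul, Nat.zero_add] at *
    have := Real.log_le_log hpos (hb x hx rest)
    rw [Real.log_pow] at this
    simpa using this
  | succ N ih =>
    have e : (N + 1) * m + rest = m + (N * m + rest) := by ring
    rw [e] at hpos ⊢
    obtain ⟨h1, h2, h3⟩ := log_two hX h0 hK hs hx _ _ hpos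
    have h4 := ih (shift_iter_mem hX hx m) h2
    rw [Finset.sum_range_succ']
    simp only [shift_iter_add] at h4
    have e2 : ∀ i, m + i * m = (i + 1) * m := fun i => by ring
    simp only [e2] at h4
    push_cast
    simp only [Nat.zero_mul, Function.iterate_zero, id]
    linarith

/-- block product weights -/
noncomputable def rl {A : Type} [Fintype A] (p : List A → ℝ) (m : ℕ) : ℕ → List A → ℝ
  | 0, l => ((Fintype.card A : ℝ)⁻¹) ^ l.length
  | (N + 1), l => p (l.take m) * rl p m N (l.drop m)

lemma rl_nonneg {A : Type} [Fintype A] {p : List A → ℝ} (hp : ∀ l, 0 ≤ p l) (m N : ℕ) (l : List A) :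
    0 ≤ rl p m N l := by
  induction N generalizing l with
  | zero => simp only [rl]; positivity
  | succ N ih => exact mul_nonneg (hp _) (ih _)

lemma sum_const_card {A : Type} [Fintype A] [Nonempty A] (n : ℕ) :
    ∑ w : Fin n → A, ((Fintype.card A : ℝ)⁻¹) ^ (List.ofFn w).length = 1 := by
  have : (Fintype.card A : ℝ) ≠ 0 := by simp
  simp [this]

lemma rl_sum {A : Type} [Fintype A] [Nonempty A] {p : List A → ℝ} (hp : ∀ l, 0 ≤ p l) (m : ℕ)
    (hsum : ∑ v : Fin m → A, p (List.ofFn v) ≤ 1) (rest : ℕ) (N n : ℕ) (hn : n = N * m + rest) :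
    ∑ w : Fin n → A, rl p m N (List.ofFn w) ≤ 1 := by
  induction N generalizing n with
  | zero => simp only [rl]; exact (sum_const_card n).le
  | succ N ih =>
    have e : n = m + (N * m + rest) := by rw [hn]; ring
    subst e
    simp only [rl]
    rw [sum_take_drop m (N * m + rest) p (rl p m N)]
    exact mul_le_one₀ hsum (Finset.sum_nonneg fun w _ => rl_nonneg hp _ _ _) (ih _ rfl)

lemma rl_log {A : Type} [Fintype A] [Nonempty A] {p : List A → ℝ} (m N rest : ℕ) (x : ℕ → A)
    (hpos : ∀ i < N, 0 < p (wordOf (shiftMap^[i * m] x) m)) :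
    0 < rl p m N (wordOf x (N * m + rest)) ∧
    Real.log (rl p m N (wordOf x (N * m + rest))) =
      ∑ i ∈ Finset.range N, Real.log (p (wordOf (shiftMap^[i * m] x) m))
        - rest * Real.log (Fintype.card A) := by
  have hc : (0 : ℝ) < Fintype.card A := by
    have := Fintype.card_pos (α := A)
    exact_mod_cast this
  induction N generalizing x with
  | zero => 
    simp only [rl, wordOf_length, Nat.zero_mul, Nat.zero_add]
    refine ⟨by positivity, ?_⟩
    rw [Real.log_pow, Real.log_inv]; simp
  | succ N ih =>
    have e : (N + 1) * m + rest = m + (N * m + rest) := by ring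
    have e2 : ∀ i, m + i * m = (i + 1) * m := fun i => by ring
    rw [e]
    simp only [rl, wordOf_take, wordOf_drop]
    obtain ⟨h1, h2⟩ := ih (shiftMap^[m] x) (fun i hi => by
      rw [shift_iter_add, e2]; exact hpos (i + 1) (by omega))
    have h3 := hpos 0 (by omega)
    simp only [Nat.zero_mul, Function.iterate_zero, id] at h3
    refine ⟨mul_pos h3 h1, ?_⟩
    rw [Real.log_mul h3.ne' h1.ne', h2, Finset.sum_range_succ']
    simp only [Nat.zero_mul, Function.iterate_zero, id, shift_iter_add, e2]
    ring

lemma per_j [Nonempty A] {X : Set (ℕ → A)} (hX : IsSubshift X) {φ : List A → ℝ}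
    (h0 : ∀ I, Lang X I → 0 ≤ φ I) {K : ℝ} (hK : 1 ≤ K)
    (hs : ∀ x ∈ X, ∀ a b : ℕ, φ (wordOf x (a + b)) ≤
      K * (φ (wordOf x a) * φ (wordOf (shiftMap^[a] x) b)))
    (hb : ∀ x ∈ X, ∀ n : ℕ, φ (wordOf x n) ≤ K ^ n) (j m N rest n : ℕ)
    (hn : n = j + (N * m + rest)) (q : (Fin n → A) → ℝ) (hq : ∀ w, 0 ≤ q w) (hq1 : ∑ w, q w = 1)
    (xx : (Fin n → A) → (ℕ → A)) (hxX : ∀ w, xx w ∈ X)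
    (hxw : ∀ w, 0 < q w → wordOf (xx w) n = List.ofFn w)
    (hφq : ∀ w, 0 < q w → 0 < φ (List.ofFn w))
    (p : List A → ℝ) (hp : ∀ l, 0 ≤ p l) (hp1 : ∑ v : Fin m → A, p (List.ofFn v) ≤ 1)
    (hpq : ∀ w, 0 < q w → ∀ i < N, 0 < p (wordOf (shiftMap^[j + i * m] (xx w)) m)) :
    ∑ w, q w * (Real.log (φ (List.ofFn w)) - Real.log (q w)) ≤
      ∑ w, q w * ∑ i ∈ Finset.range N, (Real.log (φ (wordOf (shiftMap^[j + i * m] (xx w)) m))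
        - Real.log (p (wordOf (shiftMap^[j + i * m] (xx w)) m)))
      + N * Real.log K + (j + rest + 1) * (Real.log K + Real.log (Fintype.card A)) := by
  subst hn
  have hc1 : (1 : ℝ) ≤ Fintype.card A := by
    have := Fintype.card_pos (α := A)
    exact_mod_cast this
  have hc : (0 : ℝ) < Fintype.card A := by linarith
  have hlc : 0 ≤ Real.log (Fintype.card A) := Real.log_nonneg hc1
  have hlK : 0 ≤ Real.log K := Real.log_nonneg hK
  have hrl : ∀ w, 0 < q w → 0 < rl p m N ((List.ofFn w).drop j) ∧
      Real.log (rl p m N ((List.ofFn w).drop j)) =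
      ∑ i ∈ Finset.range N, Real.log (p (wordOf (shiftMap^[j + i * m] (xx w)) m))
        - rest * Real.log (Fintype.card A) := by
    intro w hw
    have := rl_log (p := p) m N rest (shiftMap^[j] (xx w)) (fun i hi => by
      rw [shift_iter_add]; exact hpq w hw i hi)
    rw [← hxw w hw, wordOf_drop]
    simpa only [shift_iter_add] using this
  have hg := gibbs q
    (fun w => ((Fintype.card A : ℝ)⁻¹) ^ ((List.ofFn w).take j).length *
      rl p m N ((List.ofFn w).drop j)) hq
    (fun w => mul_nonneg (by positivity) (rl_nonneg hp _ _ _))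
    (fun w hw => mul_pos (by positivity) (hrl w hw).1) ?_
  · have key : ∀ w, q w * Real.log (φ (List.ofFn w)) - q w *
        Real.log (((Fintype.card A : ℝ)⁻¹) ^ ((List.ofFn w).take j).length *
          rl p m N ((List.ofFn w).drop j)) ≤ 
        q w * ∑ i ∈ Finset.range N, (Real.log (φ (wordOf (shiftMap^[j + i * m] (xx w)) m))
        - Real.log (p (wordOf (shiftMap^[j + i * m] (xx w)) m))) + 
        q w * (N * Real.log K + (j + rest + 1) * (Real.log K + Real.log (Fintype.card A))) := by
      intro w
      rcases (hq w).eq_or_lt with h | h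
      · rw [← h]; simp
      · rw [← mul_sub, ← mul_add]
        apply mul_le_mul_of_nonneg_left _ h.le
        obtain ⟨h1, h2⟩ := hrl w h
        have e : ((List.ofFn w).take j).length = j := by simp
        rw [Real.log_mul (by positivity) h1.ne', h2, e, Real.log_pow, Real.log_inv,
          Finset.sum_sub_distrib]
        have h3 := hφq w h
        rw [← hxw w h] at h3 ⊢
        obtain ⟨h4, h5, h6⟩ := log_two hX h0 hK hs (hxX w) _ _ h3
        have h7 := log_chain hX h0 hK hs hb m N rest (shift_iter_mem hX (hxX w) j) h5
        simp only [shift_iter_add] at h7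
        have h8 := Real.log_le_log h4 (hb _ (hxX w) j)
        rw [Real.log_pow] at h8
        nlinarith
    have := Finset.sum_le_sum fun w (_ : w ∈ Finset.univ) => key w
    rw [Finset.sum_sub_distrib, Finset.sum_add_distrib, ← Finset.sum_mul, hq1] at this
    simp only [mul_sub (q _) (Real.log (φ _)), Finset.sum_sub_distrib (ι := Fin (j + (N * m + rest)) → A)]
    linarith
  · rw [sum_take_drop j (N * m + rest) (fun l => ((Fintype.card A : ℝ)⁻¹) ^ l.length) (rl p m N),
      sum_const_card, one_mul, hq1]
    exact rl_sum hp m hp1 rest N _ rfl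

lemma sum_range_mul (m N : ℕ) (g : ℕ → ℝ) :
    ∑ j ∈ Finset.range m, ∑ i ∈ Finset.range N, g (j + i * m) = ∑ k ∈ Finset.range (N * m), g k := by
  rw [Finset.sum_comm]
  induction N with
  | zero => simp
  | succ N ih =>
    rw [Finset.sum_range_succ, ih, Nat.succ_mul, Finset.sum_range_add]
    simp only [add_comm]

end lower

open MeasureTheory Filter Topology
open scoped Classical ENNReal NNReal
set_option linter.unusedSectionVars false

section lower
variable {A : Type} [Fintype A] [TopologicalSpace A] [DiscreteTopology A] [MeasurableSpace A]
  [BorelSpace A]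
variable {B : Type} [Fintype B] [TopologicalSpace B] [DiscreteTopology B] [MeasurableSpace B]
  [BorelSpace B]

/-- averaged (truncated) empirical block weights -/
noncomputable def pav {A ι : Type} [Fintype ι] (q : ι → ℝ) (xx : ι → (ℕ → A)) (n m M : ℕ)
    (l : List A) : ℝ :=
  (n : ℝ)⁻¹ * ∑ k ∈ Finset.range M, ∑ w, q w * if wordOf (shiftMap^[k] (xx w)) m = l then 1 else 0

lemma sum_ite_word {A : Type} [Fintype A] (y : ℕ → A) (m : ℕ) (G : List A → ℝ) :
    ∑ v : Fin m → A, (if wordOf y m = List.ofFn v then 1 else 0) * G (List.ofFn v)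
      = G (wordOf y m) := by
  have e : ∀ v : Fin m → A, (wordOf y m = List.ofFn v) ↔ (fun i : Fin m => y i) = v := fun v =>
    List.ofFn_injective.eq_iff
  simp only [e, ite_mul, one_mul, zero_mul, Finset.sum_ite_eq, Finset.mem_univ, if_true]
  rfl

lemma pav_sum {A ι : Type} [Fintype A] [Fintype ι] (q : ι → ℝ) (xx : ι → (ℕ → A)) (n m M : ℕ)
    (G : List A → ℝ) :
    ∑ v : Fin m → A, pav q xx n m M (List.ofFn v) * G (List.ofFn v) =
      (n : ℝ)⁻¹ * ∑ k ∈ Finset.range M, ∑ w, q w * G (wordOf (shiftMap^[k] (xx w)) m) := by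
  unfold pav
  simp only [mul_assoc, ← Finset.mul_sum, Finset.sum_mul]
  congr 1
  rw [Finset.sum_comm]
  refine Finset.sum_congr rfl fun k _ => ?_
  rw [Finset.sum_comm]
  refine Finset.sum_congr rfl fun w _ => ?_
  rw [← Finset.mul_sum, sum_ite_word]

lemma pav_nonneg {A ι : Type} [Fintype ι] {q : ι → ℝ} (hq : ∀ w, 0 ≤ q w) (xx : ι → (ℕ → A))
    (n m M : ℕ) (l : List A) : 0 ≤ pav q xx n m M l := by
  unfold pav
  refine mul_nonneg (by positivity) (Finset.sum_nonneg fun k _ => Finset.sum_nonneg fun w _ => ?_)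
  exact mul_nonneg (hq w) (by split_ifs <;> norm_num)

lemma sum_j [Nonempty A] {X : Set (ℕ → A)} (hX : IsSubshift X) {φ : List A → ℝ}
    (h0 : ∀ I, Lang X I → 0 ≤ φ I) {K : ℝ} (hK : 1 ≤ K)
    (hs : ∀ x ∈ X, ∀ a b : ℕ, φ (wordOf x (a + b)) ≤
      K * (φ (wordOf x a) * φ (wordOf (shiftMap^[a] x) b)))
    (hb : ∀ x ∈ X, ∀ n : ℕ, φ (wordOf x n) ≤ K ^ n) (m n : ℕ) (hm : 1 ≤ m) (hmn : m ≤ n)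
    (q : (Fin n → A) → ℝ) (hq : ∀ w, 0 ≤ q w) (hq1 : ∑ w, q w = 1)
    (xx : (Fin n → A) → (ℕ → A)) (hxX : ∀ w, xx w ∈ X)
    (hxw : ∀ w, 0 < q w → wordOf (xx w) n = List.ofFn w)
    (hφq : ∀ w, 0 < q w → 0 < φ (List.ofFn w)) :
    m * ∑ w, q w * (Real.log (φ (List.ofFn w)) - Real.log (q w)) ≤
      n * ∑ v : Fin m → A, pav q xx n m ((n / m - 1) * m) (List.ofFn v) *
        (Real.log (φ (List.ofFn v)) - Real.log (pav q xx n m ((n / m - 1) * m) (List.ofFn v)))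
      + n * Real.log K + m * ((2 * m + 1) * (Real.log K + Real.log (Fintype.card A))) := by
  obtain ⟨N, hN⟩ : ∃ N, n / m = N + 1 := ⟨n / m - 1, by
    have := Nat.div_pos hmn hm; omega⟩
  have hN' : n / m - 1 = N := by omega
  rw [hN']
  have hdiv := Nat.div_add_mod n m
  rw [hN] at hdiv
  have hmod := Nat.mod_lt n hm
  have hnN : n = N * m + m + n % m := by rw [← hdiv]; ring_nf; simp [Nat.add_mod]
  set p := pav q xx n m (N * m) with hp
  have hn0 : (0 : ℝ) < n := by exact_mod_cast (by omega : 0 < n)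
  have hlc : 0 ≤ Real.log (Fintype.card A) := Real.log_nonneg (by
    have := Fintype.card_pos (α := A)
    exact_mod_cast this)
  have hlK : 0 ≤ Real.log K := Real.log_nonneg hK
  have hNmn : (N : ℝ) * m ≤ n := by exact_mod_cast (by omega : N * m ≤ n)
  have hp1 : ∑ v : Fin m → A, p (List.ofFn v) ≤ 1 := by
    have := pav_sum q xx n m (N * m) (fun _ => 1)
    simp only [mul_one, hq1, Finset.sum_const, Finset.card_range, nsmul_eq_mul] at this
    rw [hp, this, inv_mul_le_iff₀ hn0]
    push_cast; linarith
  have hj : ∀ j ∈ Finset.range m, ∑ w, q w * (Real.log (φ (List.ofFn w)) - Real.log (q w)) ≤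
      ∑ w, q w * ∑ i ∈ Finset.range N, (Real.log (φ (wordOf (shiftMap^[j + i * m] (xx w)) m))
        - Real.log (p (wordOf (shiftMap^[j + i * m] (xx w)) m)))
      + (N * Real.log K + (2 * m + 1) * (Real.log K + Real.log (Fintype.card A))) := by
    intro j hj
    rw [Finset.mem_range] at hj
    have h := per_j hX h0 hK hs hb j m N (n - j - N * m) n (by omega) q hq hq1 xx hxX hxw hφq p
      (pav_nonneg hq xx n m _) hp1 ?_
    · refine h.trans ?_
      rw [add_assoc]
      gcongr
      have : ((j + (n - j - N * m) : ℕ) : ℝ) ≤ ((2 * m : ℕ) : ℝ) := by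
        exact_mod_cast (by omega : j + (n - j - N * m) ≤ 2 * m)
      push_cast at this
      linarith
    · intro w hw i hi
      have hk : j + i * m ∈ Finset.range (N * m) := by
        rw [Finset.mem_range]
        have : (i + 1) * m ≤ N * m := Nat.mul_le_mul_right m hi
        rw [Nat.succ_mul] at this
        omega
      rw [hp]
      unfold pav
      refine mul_pos (by positivity) ?_
      have hnn : ∀ (k : ℕ) (l : List A) (w : Fin n → A),
          0 ≤ q w * (if wordOf (shiftMap^[k] (xx w)) m = l then (1 : ℝ) else 0) :=
        fun k l w => mul_nonneg (hq w) (by split_ifs <;> norm_num)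
      refine lt_of_lt_of_le ?_ (Finset.single_le_sum
        (fun k _ => Finset.sum_nonneg fun w _ => hnn k _ w) hk)
      refine lt_of_lt_of_le ?_ (Finset.single_le_sum
        (fun w _ => hnn _ _ w) (Finset.mem_univ w))
      simpa using hw
  have := Finset.sum_le_sum hj
  rw [Finset.sum_const, Finset.card_range, nsmul_eq_mul, Finset.sum_add_distrib, Finset.sum_const,
    Finset.card_range, nsmul_eq_mul, Finset.sum_comm] at this
  simp only [← Finset.mul_sum] at this
  have e : ∀ w, ∑ j ∈ Finset.range m, ∑ i ∈ Finset.range N,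
      (Real.log (φ (wordOf (shiftMap^[j + i * m] (xx w)) m))
        - Real.log (p (wordOf (shiftMap^[j + i * m] (xx w)) m))) =
      ∑ k ∈ Finset.range (N * m), (Real.log (φ (wordOf (shiftMap^[k] (xx w)) m))
        - Real.log (p (wordOf (shiftMap^[k] (xx w)) m))) := fun w =>
    sum_range_mul m N (fun k => Real.log (φ (wordOf (shiftMap^[k] (xx w)) m))
        - Real.log (p (wordOf (shiftMap^[k] (xx w)) m)))
  simp only [e] at this
  have h2 := pav_sum q xx n m (N * m) (fun l => Real.log (φ l) - Real.log (p l))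
  rw [Finset.sum_comm] at h2
  simp only [← Finset.mul_sum] at h2
  rw [← hp] at h2
  rw [h2, ← mul_assoc (n : ℝ), mul_inv_cancel₀ hn0.ne', one_mul]
  refine this.trans ?_
  rw [mul_add, ← add_assoc]
  have h9 : (m : ℝ) * (N * Real.log K) ≤ n * Real.log K := by
    rw [← mul_assoc]
    exact mul_le_mul_of_nonneg_right (by linarith) hlK
  linarith

/-- averaged orbit measure -/
lemma avg_measure {ι : Type} [Fintype ι] {X : Set (ℕ → A)} (hX : IsSubshift X) (q : ι → ℝ)
    (hq : ∀ w, 0 ≤ q w) (hq1 : ∑ w, q w = 1) (xx : ι → (ℕ → A)) (hxX : ∀ w, xx w ∈ X) (n : ℕ)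
    (hn : 1 ≤ n) :
    ∃ P : ProbabilityMeasure (ℕ → A), (P : Measure (ℕ → A)) X = 1 ∧ ∀ f : (ℕ → A) → ℝ,
      ∫ x, f x ∂(P : Measure (ℕ → A)) =
        (n : ℝ)⁻¹ * ∑ k ∈ Finset.range n, ∑ w, q w * f (shiftMap^[k] (xx w)) := by
  have hn0 : (0 : ℝ) < n := by exact_mod_cast hn
  set M : Measure (ℕ → A) := ∑ s ∈ Finset.range n ×ˢ (Finset.univ : Finset ι),
    ENNReal.ofReal ((n : ℝ)⁻¹ * q s.2) • Measure.dirac (shiftMap^[s.1] (xx s.2)) with hM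
  have hnn : ∀ w, 0 ≤ (n : ℝ)⁻¹ * q w := fun w => mul_nonneg (by positivity) (hq w)
  have hmeas : ∀ s : Set (ℕ → A), MeasurableSet s → X ⊆ s → M s = 1 := by
    intro s hs hXs
    rw [hM, Measure.finsetSum_apply]
    have : ∀ t ∈ Finset.range n ×ˢ (Finset.univ : Finset ι),
        (ENNReal.ofReal ((n : ℝ)⁻¹ * q t.2) • Measure.dirac (shiftMap^[t.1] (xx t.2))) s
        = ENNReal.ofReal ((n : ℝ)⁻¹ * q t.2) := by
      intro t _
      rw [Measure.smul_apply, Measure.dirac_apply' _ hs,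
        Set.indicator_of_mem (hXs (shift_iter_mem hX (hxX _) _))]
      simp
    rw [Finset.sum_congr rfl this, ← ENNReal.ofReal_sum_of_nonneg (fun t _ => hnn _),
      Finset.sum_product]
    simp only [← Finset.mul_sum, hq1, Finset.sum_const, Finset.card_range, nsmul_eq_mul]
    simp only [mul_one, mul_inv_cancel₀ hn0.ne', inv_mul_cancel₀ hn0.ne', ENNReal.ofReal_one]
  have hprob : IsProbabilityMeasure M := ⟨hmeas _ MeasurableSet.univ (Set.subset_univ _)⟩
  refine ⟨⟨M, hprob⟩, hmeas X hX.meas le_rfl, fun f => ?_⟩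
  change ∫ x, f x ∂M = _
  rw [hM, integral_finsetSum_measure]
  · rw [Finset.sum_product, Finset.mul_sum]
    refine Finset.sum_congr rfl fun k _ => ?_
    rw [Finset.mul_sum]
    refine Finset.sum_congr rfl fun w _ => ?_
    rw [integral_smul_measure, integral_dirac, ENNReal.toReal_ofReal (hnn w), smul_eq_mul]
    ring
  · intro s _
    exact (integrable_dirac (by simp)).smul_measure ENNReal.ofReal_ne_top

lemma meas_ext (μ ν : Measure (ℕ → A)) [IsProbabilityMeasure μ] [IsProbabilityMeasure ν]
    (h : ∀ (n : ℕ) (F : List A → ℝ), ∫ x, F (wordOf x n) ∂μ = ∫ x, F (wordOf x n) ∂ν) :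
    μ = ν := by
  have hres : ∀ n : ℕ, μ.map (fun (x : ℕ → A) (i : Fin n) => x i)
      = ν.map (fun (x : ℕ → A) (i : Fin n) => x i) := by
    intro n
    refine Measure.ext_of_singleton fun w => ?_
    rw [Measure.map_apply (measurable_res n) (MeasurableSet.singleton w),
      Measure.map_apply (measurable_res n) (MeasurableSet.singleton w), ← cyl_ofFn_eq]
    have := h n (fun l => if l = List.ofFn w then 1 else 0)
    rw [intw MeasurableSet.univ μ measure_univ n (fun l => if l = List.ofFn w then 1 else 0),
      intw MeasurableSet.univ ν measure_univ n (fun l => if l = List.ofFn w then 1 else 0)] at this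
    have e : ∀ v : Fin n → A, (List.ofFn v = List.ofFn w) ↔ v = w := fun v =>
      List.ofFn_injective.eq_iff
    simp only [e, mul_ite, mul_one, mul_zero, Finset.sum_ite_eq', Finset.mem_univ, if_true] at this
    rw [mw_eq MeasurableSet.univ μ measure_univ, mw_eq MeasurableSet.univ ν measure_univ] at this
    exact (ENNReal.toReal_eq_toReal_iff' (measure_ne_top _ _) (measure_ne_top _ _)).1 this
  refine IsProjectiveLimit.unique (P := fun I : Finset ℕ => ν.map I.restrict) ?_ (fun I => rfl)
  intro I
  obtain ⟨n, hn⟩ : ∃ n, ∀ i ∈ I, i < n := ⟨I.sup id + 1, fun i hi =>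
    Nat.lt_succ_of_le (Finset.le_sup (f := id) hi)⟩
  have e : (I.restrict : (ℕ → A) → (I → A)) =
      (fun (w : Fin n → A) (i : I) => w ⟨i, hn i i.2⟩) ∘ (fun (x : ℕ → A) (i : Fin n) => x i) := rfl
  rw [e, ← Measure.map_map (by fun_prop) (measurable_res n), hres,
    Measure.map_map (by fun_prop) (measurable_res n)]
  rfl

end lower

open MeasureTheory Filter Topology
open scoped Classical ENNReal NNReal
set_option linter.unusedSectionVars false

section lower
variable {A : Type} [Fintype A] [TopologicalSpace A] [DiscreteTopology A] [MeasurableSpace A]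
  [BorelSpace A]
variable {B : Type} [Fintype B] [TopologicalSpace B] [DiscreteTopology B] [MeasurableSpace B]
  [BorelSpace B]

lemma mw_int {X : Set (ℕ → A)} (hXm : MeasurableSet X) (P : Measure (ℕ → A))
    [IsProbabilityMeasure P] (hP : P X = 1) {m : ℕ} (v : Fin m → A) :
    mw X P (List.ofFn v) = ∫ x, (if wordOf x m = List.ofFn v then (1 : ℝ) else 0) ∂P := by
  have h1 := intw hXm P hP m (fun l => if l = List.ofFn v then 1 else 0)
  have e : ∀ u : Fin m → A, (List.ofFn u = List.ofFn v) ↔ u = v := fun u =>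
    List.ofFn_injective.eq_iff
  simp only [e, mul_ite, mul_one, mul_zero, Finset.sum_ite_eq', Finset.mem_univ, if_true] at h1
  exact h1.symm

lemma avg_close (n m : ℕ) (hn : 1 ≤ n) (hmn : m ≤ n) (g : ℕ → ℝ) (c C : ℝ)
    (hg : ∀ k, |g k - c| ≤ 2 * C) (hc : ∀ k, k + m ≤ n → g k = c) :
    |(n : ℝ)⁻¹ * ∑ k ∈ Finset.range n, g k - c| ≤ 2 * C * m / n := by
  have hn0 : (0 : ℝ) < n := by exact_mod_cast hn
  have e : (n : ℝ)⁻¹ * ∑ k ∈ Finset.range n, g k - c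
      = (n : ℝ)⁻¹ * ∑ k ∈ Finset.range n, (g k - c) := by
    rw [Finset.sum_sub_distrib, Finset.sum_const, Finset.card_range, nsmul_eq_mul]
    field_simp
  have h1 : |∑ k ∈ Finset.range n, (g k - c)| ≤ 2 * C * m := by
    obtain ⟨d, rfl⟩ : ∃ d, n = d + m := ⟨n - m, by omega⟩
    rw [Finset.sum_range_add]
    have z : ∑ k ∈ Finset.range d, (g k - c) = 0 := Finset.sum_eq_zero fun k hk => by
      rw [hc k (by have := Finset.mem_range.1 hk; omega), sub_self]
    rw [z, zero_add]
    refine (Finset.abs_sum_le_sum_abs _ _).trans ?_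
    refine (Finset.sum_le_sum fun k _ => hg _).trans ?_
    rw [Finset.sum_const, Finset.card_range, nsmul_eq_mul]
    linarith
  rw [e, abs_mul, abs_of_pos (inv_pos.2 hn0), inv_mul_eq_div]
  gcongr

lemma wsum_bound {ι : Type} [Fintype ι] {q : ι → ℝ} (hq : ∀ w, 0 ≤ q w) (hq1 : ∑ w, q w = 1)
    (f : ι → ℝ) (C : ℝ) (hf : ∀ w, |f w| ≤ C) : |∑ w, q w * f w| ≤ C := by
  refine (Finset.abs_sum_le_sum_abs _ _).trans ?_
  calc ∑ w, |q w * f w| ≤ ∑ w, q w * C := Finset.sum_le_sum fun w _ => by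
        rw [abs_mul, abs_of_nonneg (hq w)]
        exact mul_le_mul_of_nonneg_left (hf w) (hq w)
    _ = C := by rw [← Finset.sum_mul, hq1, one_mul]

lemma wordOf_take_drop {A : Type} (x : ℕ → A) (k m n : ℕ) (h : k + m ≤ n) :
    wordOf (shiftMap^[k] x) m = ((wordOf x n).drop k).take m := by
  obtain ⟨d, rfl⟩ : ∃ d, n = k + (m + d) := ⟨n - k - m, by omega⟩
  rw [wordOf_drop, wordOf_take]

set_option maxHeartbeats 2000000 in
lemma finite_level {X : Set (ℕ → A)} {Y : Set (ℕ → B)} (hX : IsSubshift X) (hY : IsSubshift Y)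
    {π : A → B} {φ : List A → ℝ}
    (h0 : ∀ I, Lang X I → 0 ≤ φ I) {K : ℝ} (hK : 1 ≤ K)
    (hs : ∀ x ∈ X, ∀ a b : ℕ, φ (wordOf x (a + b)) ≤
      K * (φ (wordOf x a) * φ (wordOf (shiftMap^[a] x) b)))
    (hb : ∀ x ∈ X, ∀ n : ℕ, φ (wordOf x n) ≤ K ^ n)
    {ν : ProbabilityMeasure (ℕ → B)} (hν : ν ∈ MInv Y) (n : ℕ) (hn : 1 ≤ n) (t : ℝ)
    (hpos : ∀ J : Fin n → B, 0 < mw Y ν (List.ofFn J) → 0 < psiProj X π φ (List.ofFn J))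
    (ht : t * n ≤ ∑ J : Fin n → B, mw Y ν (List.ofFn J) * Real.log (psiProj X π φ (List.ofFn J))
      + Hblock Y ν n) :
    ∃ P : ProbabilityMeasure (ℕ → A), (P : Measure (ℕ → A)) X = 1 ∧
      (∀ (m : ℕ) (F : List A → ℝ) (C : ℝ), (∀ v : Fin m → A, |F (List.ofFn v)| ≤ C) →
        |∫ x, F (wordOf (shiftMap x) m) ∂(P : Measure (ℕ → A))
          - ∫ x, F (wordOf x m) ∂(P : Measure (ℕ → A))| ≤ 2 * C / n) ∧
      (∀ (m : ℕ) (F : List B → ℝ) (C : ℝ), (∀ v : Fin m → B, |F (List.ofFn v)| ≤ C) → m ≤ n →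
        |∫ x, F (wordOf (blockMap π x) m) ∂(P : Measure (ℕ → A))
          - ∫ y, F (wordOf y m) ∂(ν : Measure (ℕ → B))| ≤ 2 * C * m / n) ∧
      (∀ m : ℕ, 1 ≤ m → m ≤ n → ∃ p : List A → ℝ,
        (∀ v : Fin m → A, |p (List.ofFn v) - mw X P (List.ofFn v)| ≤ 2 * m / n) ∧
        (∀ v : Fin m → A, φ (List.ofFn v) ≤ 0 → p (List.ofFn v) = 0) ∧
        m * (t * n) ≤ n * ∑ v : Fin m → A, p (List.ofFn v) *
          (Real.log (φ (List.ofFn v)) - Real.log (p (List.ofFn v)))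
          + n * Real.log K
          + m * ((2 * m + 1) * (Real.log K + Real.log (Fintype.card A)))) := by
  have hn0 : (0 : ℝ) < n := by exact_mod_cast hn
  obtain ⟨x₀, hx₀⟩ := hX.1
  have : Nonempty A := ⟨x₀ 0⟩
  set q : (Fin n → A) → ℝ := fun w => qd X π φ (mw Y ν) (List.ofFn w) with hq_def
  have hpos' : ∀ J : Fin n → B, mw Y ν (List.ofFn J) ≠ 0 → psiProj X π φ (List.ofFn J) ≠ 0 :=
    fun J hJ => (hpos J ((mw_nonneg _ _ _).lt_of_ne' hJ)).ne'
  have hq : ∀ w, 0 ≤ q w := fun w => qd_nonneg π h0 (mw_nonneg Y ν) _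
  have hqs := fun F => qd_sum π φ (mw Y ν) n hpos' F
  have hq1 : ∑ w, q w = 1 := by
    have := hqs (fun _ => 1)
    simp only [mul_one] at this
    rw [hq_def, this]
    exact sum_mw hY.meas ν hν.2 n
  have hxx : ∀ w : Fin n → A, ∃ x ∈ X, Lang X (List.ofFn w) → wordOf x n = List.ofFn w := by
    intro w
    by_cases h : Lang X (List.ofFn w)
    · obtain ⟨x, hx1, hx2⟩ := h
      refine ⟨x, hx2, fun _ => ?_⟩
      have := (mem_cyl_iff _ _).1 hx1
      rwa [List.length_ofFn] at this
    · exact ⟨x₀, hx₀, fun h' => absurd h' h⟩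
  choose xx hxX hxL using hxx
  have hqL : ∀ w, 0 < q w → Lang X (List.ofFn w) := by
    intro w hw
    by_contra hc
    simp [hq_def, qd, hc] at hw
  have hqv : ∀ w, 0 < q w → q w = mw Y ν ((List.ofFn w).map π) *
      (φ (List.ofFn w) / psiProj X π φ ((List.ofFn w).map π)) := by
    intro w hw
    simp [hq_def, qd, hqL w hw]
  have hxw : ∀ w, 0 < q w → wordOf (xx w) n = List.ofFn w := fun w hw => hxL w (hqL w hw)
  have hq3 : ∀ w, 0 < q w → 0 < mw Y ν ((List.ofFn w).map π) ∧ 0 < φ (List.ofFn w) ∧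
      0 < psiProj X π φ ((List.ofFn w).map π) := by
    intro w hw
    have h := hqv w hw
    have a1 : mw Y ν ((List.ofFn w).map π) ≠ 0 := fun hc => by
      rw [hc, zero_mul] at h; exact hw.ne' h
    have a2 : φ (List.ofFn w) ≠ 0 := fun hc => by
      rw [hc, zero_div, mul_zero] at h; exact hw.ne' h
    have a3 : psiProj X π φ ((List.ofFn w).map π) ≠ 0 := fun hc => by
      rw [hc, div_zero, mul_zero] at h; exact hw.ne' h
    exact ⟨(mw_nonneg _ _ _).lt_of_ne' a1, (h0 _ (hqL w hw)).lt_of_ne' a2,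
      (psiProj_nonneg π h0 _).lt_of_ne' a3⟩
  have hφq : ∀ w, 0 < q w → 0 < φ (List.ofFn w) := fun w hw => (hq3 w hw).2.1
  have hid : ∑ w, q w * (Real.log (φ (List.ofFn w)) - Real.log (q w)) =
      ∑ J : Fin n → B, mw Y ν (List.ofFn J) * Real.log (psiProj X π φ (List.ofFn J))
      + Hblock Y ν n := by
    have h1 : ∀ w, q w * (Real.log (φ (List.ofFn w)) - Real.log (q w)) =
        q w * (Real.log (psiProj X π φ ((List.ofFn w).map π))
          - Real.log (mw Y ν ((List.ofFn w).map π))) := by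
      intro w
      rcases (hq w).eq_or_lt with h | h
      · rw [← h, zero_mul, zero_mul]
      · obtain ⟨b1, b2, b3⟩ := hq3 w h
        congr 1
        rw [hqv w h, Real.log_mul b1.ne' (div_pos b2 b3).ne', Real.log_div b2.ne' b3.ne']
        ring
    rw [Finset.sum_congr rfl fun w _ => h1 w]
    have := hqs (fun J => Real.log (psiProj X π φ J) - Real.log (mw Y ν J))
    rw [hq_def, this]
    simp only [mul_sub, Finset.sum_sub_distrib, Hblock]
    ring
  obtain ⟨P, hPX, hPint⟩ := avg_measure hX q hq hq1 xx hxX n hn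
  have hPp : ∀ (m : ℕ) (v : Fin m → A), mw X P (List.ofFn v) = pav q xx n m n (List.ofFn v) := by
    intro m v
    have h1 := mw_int hX.meas P hPX v
    rw [h1, hPint (fun x => if wordOf x m = List.ofFn v then 1 else 0)]
    rfl
  refine ⟨P, hPX, ?_, ?_, ?_⟩
  · intro m F C hF
    rw [hPint (fun x => F (wordOf (shiftMap x) m)), hPint, ← mul_sub, ← Finset.sum_sub_distrib]
    have e : ∀ k, ∑ w, q w * F (wordOf (shiftMap (shiftMap^[k] (xx w))) m) =
      (fun k => ∑ w, q w * F (wordOf (shiftMap^[k] (xx w)) m)) (k + 1) := by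
      intro k
      simp only [Function.iterate_succ_apply']
    simp only [e]
    rw [Finset.sum_range_sub (fun k => ∑ w, q w * F (wordOf (shiftMap^[k] (xx w)) m)), abs_mul,
      abs_of_pos (inv_pos.2 hn0), inv_mul_eq_div]
    gcongr
    have b1 := wsum_bound hq hq1 (fun w => F (wordOf (shiftMap^[n] (xx w)) m)) C fun w => hF _
    have b2 := wsum_bound hq hq1 (fun w => F (wordOf (shiftMap^[0] (xx w)) m)) C fun w => hF _
    refine (abs_sub _ _).trans ?_
    linarith
  · intro m F C hF hmn
    rw [hPint (fun x => F (wordOf (blockMap π x) m))]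
    have hcC : |∫ y, F (wordOf y m) ∂(ν : Measure (ℕ → B))| ≤ C := by
      rw [intw hY.meas ν hν.2 m F]
      exact wsum_bound (fun w => mw_nonneg Y ν _) (sum_mw hY.meas ν hν.2 m) _ C fun w => hF _
    apply avg_close n m hn hmn
    · intro k
      have b1 := wsum_bound hq hq1 (fun w => F (wordOf (blockMap π (shiftMap^[k] (xx w))) m)) C
        fun w => hF _
      refine (abs_sub _ _).trans ?_
      linarith
    · intro k hk
      have h1 : ∀ w, q w * F (wordOf (blockMap π (shiftMap^[k] (xx w))) m) =
          q w * (fun J : List B => F ((J.drop k).take m)) ((List.ofFn w).map π) := by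
        intro w
        rcases (hq w).eq_or_lt with h | h
        · rw [← h, zero_mul, zero_mul]
        · rw [blockMap_shift_iter, wordOf_take_drop _ k m n hk, wordOf_blockMap, hxw w h]
      rw [Finset.sum_congr rfl fun w _ => h1 w]
      refine (hqs (fun J : List B => F ((J.drop k).take m))).trans ?_
      rw [← intw hY.meas ν hν.2 n (fun J : List B => F ((J.drop k).take m)),
        ← int_shift hν.1 k m F]
      refine integral_congr_ae (Eventually.of_forall fun y => ?_)
      simp only [wordOf_take_drop y k m n hk]
  · intro m hm hmn
    refine ⟨pav q xx n m ((n / m - 1) * m), ?_, ?_, ?_⟩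
    · intro v
      set M := (n / m - 1) * m with hM
      have hMn : M ≤ n ∧ n ≤ M + 2 * m := by
        obtain ⟨N, hN⟩ : ∃ N, n / m = N + 1 := ⟨n / m - 1, by
          have := Nat.div_pos hmn hm; omega⟩
        have hdiv := Nat.div_add_mod n m
        have hmod := Nat.mod_lt n hm
        rw [hN] at hdiv
        have e : M = N * m := by rw [hM, hN]; simp
        have e2 : m * (N + 1) = N * m + m := by ring
        omega
      obtain ⟨d, hd⟩ : ∃ d, n = M + d := ⟨n - M, by omega⟩
      rw [hPp]
      unfold pav
      have hr : Finset.range n = Finset.range (M + d) := by rw [← hd]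
      rw [hr, Finset.sum_range_add, mul_add, sub_add_cancel_left, abs_neg, abs_mul,
        abs_of_pos (inv_pos.2 hn0), inv_mul_eq_div]
      gcongr
      refine (Finset.abs_sum_le_sum_abs _ _).trans ?_
      refine (Finset.sum_le_sum fun k _ => wsum_bound hq hq1 _ 1 fun w => ?_).trans ?_
      · split_ifs <;> simp
      · simp only [Finset.sum_const, Finset.card_range, nsmul_eq_mul, mul_one]
        exact_mod_cast (by omega : d ≤ 2 * m)
    · intro v hv
      unfold pav
      rw [Finset.sum_eq_zero, mul_zero]
      intro k hk
      refine Finset.sum_eq_zero fun w _ => ?_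
      rcases (hq w).eq_or_lt with h | h
      · rw [← h, zero_mul]
      · rw [if_neg, mul_zero]
        intro hc
        have hkm : k + m ≤ n := by
          have h1 := Finset.mem_range.1 hk
          have h2 : (n / m - 1) * m + m ≤ n := by
            obtain ⟨N, hN⟩ : ∃ N, n / m = N + 1 := ⟨n / m - 1, by
              have := Nat.div_pos hmn hm; omega⟩
            have hdiv := Nat.div_mul_le_self n m
            rw [hN] at hdiv ⊢
            simp only [Nat.add_sub_cancel]
            rwa [Nat.succ_mul] at hdiv
          omega
        obtain ⟨d, hd⟩ : ∃ d, n = k + (m + d) := ⟨n - k - m, by omega⟩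
        have hw1 := hφq w h
        rw [← hxw w h] at hw1
        have e : wordOf (xx w) n = wordOf (xx w) (k + (m + d)) := by rw [← hd]
        rw [e] at hw1
        have h2 := (log_two hX h0 hK hs (hxX w) k (m + d) hw1).2.1
        have h3 := (log_two hX h0 hK hs (shift_iter_mem hX (hxX w) k) m d h2).1
        rw [hc] at h3
        exact absurd h3 (not_lt.2 hv)
    · have := sum_j hX h0 hK hs hb m n hm hmn q hq hq1 xx hxX hxw hφq
      rw [hid] at this
      refine le_trans ?_ this
      gcongr

end lower

open MeasureTheory Filter Topology
open scoped Classical ENNReal NNReal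
set_option linter.unusedSectionVars false

section lower
variable {A : Type} [Fintype A] [TopologicalSpace A] [DiscreteTopology A] [MeasurableSpace A]
  [BorelSpace A]
variable {B : Type} [Fintype B] [TopologicalSpace B] [DiscreteTopology B] [MeasurableSpace B]
  [BorelSpace B]

lemma word_tendsto {U : Filter ℕ} {P : ℕ → ProbabilityMeasure (ℕ → A)}
    {η : ProbabilityMeasure (ℕ → A)} (h : Tendsto P U (𝓝 η)) (m : ℕ) (F : List A → ℝ) :
    Tendsto (fun n => ∫ x, F (wordOf x m) ∂(P n : Measure (ℕ → A))) U
      (𝓝 (∫ x, F (wordOf x m) ∂(η : Measure (ℕ → A)))) := by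
  have hc : Continuous (fun x : ℕ → A => F (wordOf x m)) := by
    have h1 : Continuous (fun w : Fin m → A => F (List.ofFn w)) := continuous_of_discreteTopology
    have h2 : Continuous (fun (x : ℕ → A) (i : Fin m) => x i) := by fun_prop
    exact h1.comp h2
  exact (ProbabilityMeasure.tendsto_iff_forall_integral_tendsto.1 h)
    (BoundedContinuousFunction.mkOfCompact ⟨_, hc⟩)

lemma good_of_lt {X : Set (ℕ → A)} {Y : Set (ℕ → B)} (hY : IsSubshift Y)
    {π : A → B} {φ : List A → ℝ} 
    {ν : ProbabilityMeasure (ℕ → B)} (hν : ν ∈ MInv Y) (t : ℝ)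
    (ht : (t : EReal) < eqVal Y (genPot (psiProj X π φ)) ν) :
    ∀ᶠ n : ℕ in atTop, 1 ≤ n ∧
      (∀ J : Fin n → B, 0 < mw Y ν (List.ofFn J) → 0 < psiProj X π φ (List.ofFn J)) ∧
      t * n ≤ ∑ J : Fin n → B, mw Y ν (List.ofFn J) * Real.log (psiProj X π φ (List.ofFn J))
      + Hblock Y ν n := by
  rw [eqVal_eq hY.meas _ hν] at ht
  filter_upwards [eventually_lt_of_lt_liminf ht, eventually_ge_atTop 1] with n h1 hn
  have hn0 : (0 : ℝ) < n := by exact_mod_cast hn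
  have hpos : ∀ J : Fin n → B, 0 < mw Y ν (List.ofFn J) → 0 < psiProj X π φ (List.ofFn J) := by
    by_contra hc
    push Not at hc
    rw [intlog_bot hY.meas ν hν.2 n _ hc, EReal.bot_add,
      EReal.coe_mul_bot_of_pos (inv_pos.2 hn0)] at h1
    exact absurd h1 not_lt_bot
  refine ⟨hn, hpos, ?_⟩
  rw [intlog_real hY.meas ν hν.2 n _ hpos, ← EReal.coe_add, ← EReal.coe_mul,
    EReal.coe_lt_coe_iff, inv_mul_eq_div, lt_div_iff₀ hn0] at h1
  exact h1.le

set_option maxHeartbeats 2000000 in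
lemma lower {X : Set (ℕ → A)} {Y : Set (ℕ → B)} (hX : IsSubshift X) (hY : IsSubshift Y)
    {π : A → B} {φ : List A → ℝ} (hφ : Submult X φ)
    {ν : ProbabilityMeasure (ℕ → B)} (hν : ν ∈ MInv Y) (t : ℝ)
    (ht : (t : EReal) < eqVal Y (genPot (psiProj X π φ)) ν) :
    ∃ η ∈ MInv X, pushM π η = ν ∧ (t : EReal) ≤ eqVal X (genPot φ) η := by
  obtain ⟨K, hK, hs, hb⟩ := submult_bound hX hφ
  have h0 := hφ.1
  obtain ⟨x₀, hx₀⟩ := hX.1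
  have hne : Nonempty (ProbabilityMeasure (ℕ → A)) := ⟨⟨Measure.dirac x₀, inferInstance⟩⟩
  have hev := (good_of_lt hY hν t ht).mono fun n h =>
    finite_level (π := π) hX hY h0 hK hs hb hν n h.1 t h.2.1 h.2.2
  obtain ⟨P, hP⟩ := hev.choice
  obtain ⟨U, hU⟩ : ∃ U : Ultrafilter ℕ, (U : Filter ℕ) ≤ atTop :=
    ⟨Ultrafilter.of atTop, Ultrafilter.of_le _⟩
  obtain ⟨η, hη⟩ : ∃ η, Tendsto P U (𝓝 η) := ⟨_, Ultrafilter.le_nhds_lim (U.map P)⟩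
  replace hP := hP.filter_mono hU
  have hge : ∀ m : ℕ, ∀ᶠ n : ℕ in U, m ≤ n := fun m => (eventually_ge_atTop m).filter_mono hU
  have hdiv : ∀ c : ℝ, Tendsto (fun n : ℕ => c / n) U (𝓝 0) := fun c =>
    (tendsto_const_div_atTop_nhds_zero_nat c).mono_left hU
  have hbd : ∀ {D : Type} [Fintype D] (m : ℕ) (F : List D → ℝ) (v : Fin m → D),
      |F (List.ofFn v)| ≤ ∑ v : Fin m → D, |F (List.ofFn v)| := fun m F v =>
    Finset.single_le_sum (f := fun v => |F (List.ofFn v)|) (fun _ _ => abs_nonneg _)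
      (Finset.mem_univ v)
  have hηX : (η : Measure (ℕ → A)) X = 1 := by
    refine le_antisymm prob_le_one ?_
    have h1 := ProbabilityMeasure.limsup_measure_closed_le_of_tendsto hη hX.2.1.isClosed
    refine le_trans ?_ h1
    have h2 : Tendsto (fun n => (P n : Measure (ℕ → A)) X) U (𝓝 1) :=
      tendsto_const_nhds.congr' (hP.mono fun n h => h.1.symm)
    rw [h2.limsup_eq]
  have hηinv : (η : Measure (ℕ → A)).map shiftMap = η := by
    have : IsProbabilityMeasure ((η : Measure (ℕ → A)).map shiftMap) :=
      Measure.isProbabilityMeasure_map measurable_shift.aemeasurable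
    refine meas_ext _ _ fun m F => ?_
    rw [integral_map measurable_shift.aemeasurable
      (measurable_wordFun m F).aestronglyMeasurable]
    have e : ∀ x : ℕ → A, F (wordOf (shiftMap x) m) = (fun l => F (l.drop 1)) (wordOf x (1 + m)) :=
      fun x => by simp only [wordOf_drop, Function.iterate_one]
    have t1 := word_tendsto hη (1 + m) (fun l => F (l.drop 1))
    simp only [← e] at t1
    have t2 := word_tendsto hη m F
    have t3 : Tendsto (fun n => ∫ x, F (wordOf (shiftMap x) m) ∂(P n : Measure (ℕ → A))
          - ∫ x, F (wordOf x m) ∂(P n : Measure (ℕ → A))) U (𝓝 0) :=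
      squeeze_zero_norm' (hP.mono fun n h => h.2.1 m F _ (hbd m F)) (hdiv _)
    exact sub_eq_zero.1 (tendsto_nhds_unique (t1.sub t2) t3)
  have hpush : pushM π η = ν := by
    have := pushM_prob π η
    refine meas_ext _ _ fun m F => ?_
    unfold pushM
    rw [integral_map (measurable_blockMap π).aemeasurable
      (measurable_wordFun m F).aestronglyMeasurable]
    have e : ∀ x : ℕ → A, F (wordOf (blockMap π x) m) = (fun l => F (l.map π)) (wordOf x m) :=
      fun x => by simp only [wordOf_blockMap]
    have t1 := word_tendsto hη m (fun l => F (l.map π))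
    simp only [← e] at t1
    have t3 : Tendsto (fun n => ∫ x, F (wordOf (blockMap π x) m) ∂(P n : Measure (ℕ → A))
          - ∫ y, F (wordOf y m) ∂(ν : Measure (ℕ → B))) U (𝓝 0) := by
      refine squeeze_zero_norm' ?_ (hdiv (2 * (∑ v : Fin m → B, |F (List.ofFn v)|) * m))
      filter_upwards [hP, hge m] with n h hn
      exact h.2.2.1 m F _ (hbd m F) hn
    exact sub_eq_zero.1 (tendsto_nhds_unique (t1.sub tendsto_const_nhds) t3)
  have hηM : η ∈ MInv X := ⟨hηinv, hηX⟩
  have key : ∀ m : ℕ, 1 ≤ m →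
      (∀ v : Fin m → A, φ (List.ofFn v) ≤ 0 → mw X η (List.ofFn v) = 0) ∧
      m * t ≤ ∑ v : Fin m → A, mw X η (List.ofFn v) * Real.log (φ (List.ofFn v))
        + Hblock X η m + Real.log K := by
    intro m hm
    have hpe : ∀ᶠ n in (U : Filter ℕ), ∃ p : List A → ℝ,
        (∀ v : Fin m → A, |p (List.ofFn v) - mw X (P n) (List.ofFn v)| ≤ 2 * m / n) ∧
        (∀ v : Fin m → A, φ (List.ofFn v) ≤ 0 → p (List.ofFn v) = 0) ∧
        m * (t * n) ≤ n * ∑ v : Fin m → A, p (List.ofFn v) *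
          (Real.log (φ (List.ofFn v)) - Real.log (p (List.ofFn v)))
          + n * Real.log K
          + m * ((2 * m + 1) * (Real.log K + Real.log (Fintype.card A))) := by
      filter_upwards [hP, hge m] with n h hn
      exact h.2.2.2 m hm hn
    obtain ⟨p, hp⟩ := hpe.choice
    have hpt : ∀ v : Fin m → A, Tendsto (fun n => p n (List.ofFn v)) U
        (𝓝 (mw X η (List.ofFn v))) := by
      intro v
      have t2 := word_tendsto hη m (fun l => if l = List.ofFn v then 1 else 0)
      rw [← mw_int hX.meas η hηX v] at t2
      have t3 : Tendsto (fun n => p n (List.ofFn v) - 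
          ∫ x, (if wordOf x m = List.ofFn v then (1 : ℝ) else 0) ∂(P n : Measure (ℕ → A)))
          U (𝓝 0) := by
        refine squeeze_zero_norm' ?_ (hdiv (2 * m))
        filter_upwards [hP, hp] with n h1 h2
        rw [← mw_int hX.meas (P n) h1.1 v]
        exact h2.1 v
      have t4 := t3.add t2
      simp only [sub_add_cancel, zero_add] at t4
      exact t4
    refine ⟨fun v hv => ?_, ?_⟩
    · refine tendsto_nhds_unique (hpt v) (tendsto_const_nhds.congr' ?_)
      filter_upwards [hp] with n h
      exact (h.2.1 v hv).symm
    · have t5 : Tendsto (fun n : ℕ => ∑ v : Fin m → A, (p n (List.ofFn v) *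
          Real.log (φ (List.ofFn v)) + Real.negMulLog (p n (List.ofFn v))) + Real.log K
          + (m * ((2 * m + 1) * (Real.log K + Real.log (Fintype.card A)))) / n) U
          (𝓝 (∑ v : Fin m → A, (mw X η (List.ofFn v) *
          Real.log (φ (List.ofFn v)) + Real.negMulLog (mw X η (List.ofFn v))) + Real.log K + 0)) := by
        refine Tendsto.add (Tendsto.add (tendsto_finsetSum _ fun v _ => ?_) tendsto_const_nhds)
          (hdiv _)
        exact ((hpt v).mul_const _).add
          ((Real.continuous_negMulLog.tendsto _).comp (hpt v))
      have t6 := ge_of_tendsto t5 (b := m * t) (by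
        filter_upwards [hp, hge 1] with n h hn
        have hn0 : (0 : ℝ) < n := by exact_mod_cast hn
        have h3 := h.2.2
        have e : ∑ v : Fin m → A, (p n (List.ofFn v) *
          Real.log (φ (List.ofFn v)) + Real.negMulLog (p n (List.ofFn v))) =
          ∑ v : Fin m → A, p n (List.ofFn v) *
          (Real.log (φ (List.ofFn v)) - Real.log (p n (List.ofFn v))) :=
          Finset.sum_congr rfl fun v _ => by unfold Real.negMulLog; ring
        rw [e]
        refine le_of_mul_le_mul_left ?_ hn0
        rw [mul_add, mul_div_cancel₀ _ hn0.ne', mul_add]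
        linarith)
      refine t6.trans (le_of_eq ?_)
      rw [Finset.sum_add_distrib, add_zero]
      unfold Hblock Real.negMulLog
      rw [← Finset.sum_neg_distrib]
      simp only [neg_mul]
  refine ⟨η, hηM, hpush, ?_⟩
  rw [eqVal_eq hX.meas _ hηM]
  have tl : Tendsto (fun m : ℕ => ((t - Real.log K / m : ℝ) : EReal)) atTop (𝓝 (t : EReal)) := by
    refine (continuous_coe_real_ereal.tendsto t).comp ?_
    have := (tendsto_const_nhds (x := t)).sub (tendsto_const_div_atTop_nhds_zero_nat (Real.log K))
    rwa [sub_zero] at this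
  rw [← tl.liminf_eq]
  refine liminf_le_liminf ?_
  filter_upwards [eventually_ge_atTop 1] with m hm
  have hm0 : (0 : ℝ) < m := by exact_mod_cast hm
  obtain ⟨k1, k2⟩ := key m hm
  rw [intlog_real hX.meas η hηX m φ (fun w hw => by
    by_contra hc
    exact hw.ne' (k1 w (not_lt.1 hc))), ← EReal.coe_add, ← EReal.coe_mul, EReal.coe_le_coe_iff]
  refine le_of_mul_le_mul_left ?_ hm0
  rw [← mul_assoc, mul_inv_cancel₀ hm0.ne', one_mul, mul_sub, mul_div_cancel₀ _ hm0.ne']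
  linarith

end lower

open MeasureTheory Filter Topology
open scoped Classical ENNReal NNReal
set_option linter.unusedSectionVars false

section final
variable {A : Type} [Fintype A] [TopologicalSpace A] [DiscreteTopology A] [MeasurableSpace A]
  [BorelSpace A]
variable {B : Type} [Fintype B] [TopologicalSpace B] [DiscreteTopology B] [MeasurableSpace B]
  [BorelSpace B]

/-- relativized variational principle -/
lemma rvp {X : Set (ℕ → A)} {Y : Set (ℕ → B)} (hX : IsSubshift X) (hY : IsSubshift Y)
    {π : A → B} (hπ : blockMap π '' X = Y) {φ : List A → ℝ} (hφ : Submult X φ)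
    {ν : ProbabilityMeasure (ℕ → B)} (hν : ν ∈ MInv Y) :
    eqVal Y (genPot (psiProj X π φ)) ν =
      ⨆ η ∈ {η | η ∈ MInv X ∧ pushM π η = ν}, eqVal X (genPot φ) η := by
  apply le_antisymm
  · refine EReal.ge_of_forall_gt_iff_ge.1 fun t ht => ?_
    obtain ⟨η, h1, h2, h3⟩ := lower hX hY hφ hν t ht
    exact h3.trans (le_iSup₂_of_le η ⟨h1, h2⟩ le_rfl)
  · exact iSup₂_le fun η hη => upper hX.meas hY.meas hπ hφ.1 hη.1 hν hη.2

lemma submult_rpow {X : Set (ℕ → A)} {φ : List A → ℝ} (hφ : Submult X φ) {c : ℝ} (hc : 0 < c) :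
    Submult X (fun I => φ I ^ c) := by
  obtain ⟨h0, h1, d, hd, h⟩ := hφ
  refine ⟨fun I hI => Real.rpow_nonneg (h0 I hI) c, by simp [h1], d ^ c, Real.rpow_pos_of_pos hd c,
    fun I J hIJ => ?_⟩
  have hI : Lang X I := by
    obtain ⟨x, hx, hxX⟩ := hIJ
    exact ⟨x, ((mem_cyl_append x I J).1 hx).1, hxX⟩
  have hI0 := h0 I hI
  have h2 := h I J hIJ
  have h3 := h0 _ hIJ
  rcases hI0.eq_or_lt with hz | hp
  · have : φ (I ++ J) = 0 := le_antisymm (by rw [← hz] at h2; simpa using h2) h3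
    simp only [this, ← hz]
    rw [Real.zero_rpow hc.ne']
    simp
  · have hJ0 : 0 ≤ φ J := by
      by_contra hn
      have : d⁻¹ * φ I * φ J < 0 := mul_neg_of_pos_of_neg (by positivity) (not_le.1 hn)
      linarith
    calc φ (I ++ J) ^ c ≤ (d⁻¹ * φ I * φ J) ^ c := Real.rpow_le_rpow h3 h2 hc.le
      _ = (d ^ c)⁻¹ * φ I ^ c * φ J ^ c := by
        rw [Real.mul_rpow (by positivity) hJ0, Real.mul_rpow (by positivity) hI0,
          Real.inv_rpow hd.le]

lemma phiStar_rpow {X : Set (ℕ → A)} (hXm : MeasurableSet X) {φ : List A → ℝ}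
    (hφ : ∀ I, Lang X I → 0 ≤ φ I) {c : ℝ} (hc : 0 < c) {μ : ProbabilityMeasure (ℕ → A)}
    (hμ : μ ∈ MInv X) :
    PhiStar (μ : Measure (ℕ → A)) (genPot (fun I => φ I ^ c)) =
      (c : EReal) * PhiStar (μ : Measure (ℕ → A)) (genPot φ) := by
  unfold PhiStar
  rw [← EReal.liminf_const_mul_of_nonneg_of_ne_top (EReal.coe_nonneg.2 hc.le) (EReal.coe_ne_top c)]
  congr 1
  funext n
  have key : intlog (μ : Measure (ℕ → A)) (genPot (fun I => φ I ^ c) n)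
      = (c : EReal) * intlog (μ : Measure (ℕ → A)) (genPot φ n) := by
    by_cases hb : ∃ w : Fin n → A, 0 < mw X μ (List.ofFn w) ∧ φ (List.ofFn w) ≤ 0
    · rw [intlog_bot hXm μ hμ.2 n φ hb, EReal.coe_mul_bot_of_pos hc]
      apply intlog_bot hXm μ hμ.2
      obtain ⟨w, h1, h2⟩ := hb
      refine ⟨w, h1, ?_⟩
      rw [le_antisymm h2 (hφ _ (mw_pos_lang h1)), Real.zero_rpow hc.ne']
    · push Not at hb
      rw [intlog_real hXm μ hμ.2 n φ hb, intlog_real hXm μ hμ.2 n _ (fun w hw =>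
        Real.rpow_pos_of_pos (hb w hw) c), ← EReal.coe_mul, EReal.coe_eq_coe_iff, Finset.mul_sum]
      refine Finset.sum_congr rfl fun w _ => ?_
      rcases (mw_nonneg X (μ : Measure (ℕ → A)) (List.ofFn w)).eq_or_lt with h | h
      · rw [← h]; simp
      · rw [Real.log_rpow (hb w h)]
        ring
  simp only [key, mul_left_comm]

/-- `x ↦ a x + b` on the extended reals -/
noncomputable def affE (a b : ℝ) (ha : 0 < a) : EReal ≃o EReal :=
  Equiv.toOrderIso
    { toFun := fun x => (a : EReal) * x + (b : EReal)
      invFun := fun x => ((a⁻¹ : ℝ) : EReal) * (x + ((-b : ℝ) : EReal))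
      left_inv := by
        intro x
        induction x using EReal.rec with
        | bot => simp only [EReal.coe_mul_bot_of_pos ha, EReal.bot_add,
            EReal.coe_mul_bot_of_pos (inv_pos.2 ha)]
        | top => simp only [EReal.coe_mul_top_of_pos ha, EReal.top_add_coe,
            EReal.coe_mul_top_of_pos (inv_pos.2 ha)]
        | coe x =>
          simp only [← EReal.coe_mul, ← EReal.coe_add, EReal.coe_eq_coe_iff]
          field_simp
          ring
      right_inv := by
        intro x
        induction x using EReal.rec with
        | bot => simp only [EReal.bot_add, EReal.coe_mul_bot_of_pos (inv_pos.2 ha),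
            EReal.coe_mul_bot_of_pos ha]
        | top => simp only [EReal.top_add_coe, EReal.coe_mul_top_of_pos (inv_pos.2 ha),
            EReal.coe_mul_top_of_pos ha]
        | coe x =>
          simp only [← EReal.coe_mul, ← EReal.coe_add, EReal.coe_eq_coe_iff]
          field_simp
          ring }
    (fun x y h => add_le_add_left (mul_le_mul_of_nonneg_left h (EReal.coe_nonneg.2 ha.le)) _)
    (fun x y h => mul_le_mul_of_nonneg_left (add_le_add_left h _)
      (EReal.coe_nonneg.2 (inv_pos.2 ha).le))

lemma affE_apply (a b : ℝ) (ha : 0 < a) (x : EReal) :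
    affE a b ha x = (a : EReal) * x + (b : EReal) := rfl

lemma aff_one (a b h : ℝ) (ha : 0 < a) (p : EReal) :
    p + ((a * h + b : ℝ) : EReal) = affE a b ha (((a⁻¹ : ℝ) : EReal) * p + (h : EReal)) := by
  rw [affE_apply]
  induction p using EReal.rec with
  | bot => simp only [EReal.bot_add, EReal.coe_mul_bot_of_pos (inv_pos.2 ha),
      EReal.coe_mul_bot_of_pos ha]
  | top => simp only [EReal.top_add_coe, EReal.coe_mul_top_of_pos (inv_pos.2 ha),
      EReal.coe_mul_top_of_pos ha]
  | coe x =>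
    norm_cast
    field_simp
    ring

lemma aff_two (a₁ a₂ h : ℝ) (ha₁ : 0 < a₁) (hs : 0 < a₁ + a₂) (p : EReal) :
    affE (a₁ + a₂) 0 hs ((((a₁ + a₂)⁻¹ : ℝ) : EReal) * ((a₁ : EReal) * p) + (h : EReal)) =
      affE a₁ (a₂ * h) ha₁ (p + (h : EReal)) := by
  rw [affE_apply, affE_apply]
  induction p using EReal.rec with
  | bot => simp only [EReal.bot_add, EReal.coe_mul_bot_of_pos (inv_pos.2 hs),
      EReal.coe_mul_bot_of_pos ha₁, EReal.coe_mul_bot_of_pos hs]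
  | top => simp only [EReal.top_add_coe, EReal.coe_mul_top_of_pos (inv_pos.2 hs),
      EReal.coe_mul_top_of_pos ha₁, EReal.coe_mul_top_of_pos hs]
  | coe x =>
    norm_cast
    field_simp
    ring

theorem main_aux 
    (X : Set (ℕ → A)) (Y : Set (ℕ → B)) (hX : IsSubshift X) (hY : IsSubshift Y)
    (π : A → B) (hπ : blockMap π '' X = Y)
    (a₁ a₂ : ℝ) (ha₁ : 0 < a₁) (ha₂ : 0 ≤ a₂)
    (φ : List A → ℝ) (hφ : Submult X φ)
    (μ : ProbabilityMeasure (ℕ → A)) :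
    μ ∈ WEqSet2 X Y π (genPot φ) a₁ a₂ ↔
      ∃ ν : ProbabilityMeasure (ℕ → B), (ν : Measure (ℕ → B)) = pushM π μ ∧
        ν ∈ EqSet Y (scPot (a₁ + a₂)⁻¹ (genPot (phiTwo X π φ a₁))) ∧
        μ ∈ CondEqSet X π (scPot a₁⁻¹ (genPot φ)) (ν : Measure (ℕ → B)) := by
  have hs : 0 < a₁ + a₂ := by linarith
  set φ' : List A → ℝ := fun I => φ I ^ a₁⁻¹ with hφ'
  have hsub : Submult X φ' := submult_rpow hφ (inv_pos.2 ha₁)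
  set ψ := psiProj X π φ' with hψ
  have hψ0 : ∀ J, 0 ≤ ψ J := psiProj_nonneg π hsub.1
  set E : ProbabilityMeasure (ℕ → A) → EReal := eqVal X (genPot φ') with hE
  set V : ProbabilityMeasure (ℕ → B) → EReal := eqVal Y (genPot ψ) with hV
  set W : ProbabilityMeasure (ℕ → A) → EReal := wVal2 X Y π (genPot φ) a₁ a₂ with hW
  set G : ProbabilityMeasure (ℕ → B) → EReal := fun ν =>
    affE a₁ (a₂ * ent Y (ν : Measure (ℕ → B))) ha₁ (V ν) with hG
  set G' : ProbabilityMeasure (ℕ → B) → EReal :=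
    eqVal Y (scPot (a₁ + a₂)⁻¹ (genPot (phiTwo X π φ a₁))) with hG'
  have hEX : eqVal X (scPot a₁⁻¹ (genPot φ)) = E := rfl
  have hWE : ∀ η ∈ MInv X, W η = affE a₁ (a₂ * ent Y (pushM π η)) ha₁ (E η) := by
    intro η hη
    rw [hW, hE]
    unfold wVal2 eqVal
    rw [hφ', phiStar_rpow hX.meas hφ.1 (inv_pos.2 ha₁) hη]
    exact aff_one _ _ _ ha₁ _
  have hGG : ∀ ν ∈ MInv Y, affE (a₁ + a₂) 0 hs (G' ν) = G ν := by
    intro ν hν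
    rw [hG, hG', hV]
    have e1 : scPot (a₁ + a₂)⁻¹ (genPot (phiTwo X π φ a₁))
      = genPot (fun J => (fun J => ψ J ^ a₁) J ^ (a₁ + a₂)⁻¹) := rfl
    rw [e1]
    unfold eqVal
    rw [phiStar_rpow hY.meas (fun J _ => Real.rpow_nonneg (hψ0 J) a₁) (inv_pos.2 hs) hν,
      phiStar_rpow hY.meas (fun J _ => hψ0 J) ha₁ hν]
    exact aff_two _ _ _ ha₁ hs _
  have hVs : ∀ ν ∈ MInv Y, V ν = ⨆ η ∈ {η | η ∈ MInv X ∧ pushM π η = ν}, E η := fun ν hν =>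
    rvp hX hY hπ hsub hν
  have hGs : ∀ ν ∈ MInv Y, G ν = ⨆ η ∈ {η | η ∈ MInv X ∧ pushM π η = ν}, W η := by
    intro ν hν
    rw [hG]
    simp only
    rw [hVs ν hν]
    simp only [OrderIso.map_iSup]
    refine iSup_congr fun η => iSup_congr fun hη => ?_
    rw [hWE η hη.1, hη.2]
  have hpush : ∀ η ∈ MInv X, ∃ ν ∈ MInv Y, (ν : Measure (ℕ → B)) = pushM π η := by
    intro η hη
    exact ⟨⟨pushM π η, pushM_prob π η⟩, ⟨pushM_inv hη, pushM_full hY.meas hπ hη⟩, rfl⟩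
  have hsup : ⨆ ν ∈ MInv Y, G ν = ⨆ η ∈ MInv X, W η := by
    apply le_antisymm
    · refine iSup₂_le fun ν hν => ?_
      rw [hGs ν hν]
      exact iSup₂_le fun η hη => le_iSup₂_of_le η hη.1 le_rfl
    · refine iSup₂_le fun η hη => ?_
      obtain ⟨ν, hν, e⟩ := hpush η hη
      refine le_iSup₂_of_le ν hν ?_
      rw [hGs ν hν]
      exact le_iSup₂_of_le η ⟨hη, e.symm⟩ le_rfl
  have hG'iff : ∀ ν ∈ MInv Y, (G' ν = ⨆ ν ∈ MInv Y, G' ν) ↔ G ν = ⨆ η ∈ MInv X, W η := by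
    intro ν hν
    rw [← (affE (a₁ + a₂) 0 hs).injective.eq_iff, hGG ν hν, ← hsup]
    simp only [OrderIso.map_iSup]
    rw [iSup_congr fun ν => iSup_congr fun hν => hGG ν hν]
  constructor
  · rintro ⟨hμ, hμW⟩
    change W μ = ⨆ η ∈ MInv X, W η at hμW
    obtain ⟨ν, hν, e⟩ := hpush μ hμ
    have h1 : W μ ≤ G ν := by
      rw [hGs ν hν]
      exact le_iSup₂_of_le μ ⟨hμ, e.symm⟩ le_rfl
    have h2 : G ν ≤ ⨆ η ∈ MInv X, W η := by
      rw [← hsup]; exact le_iSup₂_of_le ν hν le_rfl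
    have h3 : G ν = W μ := le_antisymm (h2.trans hμW.ge) h1
    refine ⟨ν, e, ⟨hν, (hG'iff ν hν).2 (h3.trans hμW)⟩, hμ, e.symm, ?_⟩
    rw [hEX, ← hVs ν hν]
    rw [hWE μ hμ, ← e] at h3
    exact ((affE a₁ _ ha₁).injective h3).symm
  · rintro ⟨ν, e, ⟨hν, h1⟩, hμ, -, h2⟩
    refine ⟨hμ, ?_⟩
    change W μ = ⨆ η ∈ MInv X, W η
    rw [hEX, ← hVs ν hν] at h2
    rw [← (hG'iff ν hν).1 h1, hWE μ hμ, h2, ← e]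

end final

/-- Corollary 3.4(i) / `cor-1.1`(i): `μ` is an `a`-weighted equilibrium state of
`Φ` iff `μ∘π⁻¹` is an equilibrium state of `(1/(a₁+a₂))Φ^{(2)}` and `μ` is a conditional
equilibrium state of `(1/a₁)Φ` with respect to `μ∘π⁻¹`. -/
theorem weighted_eq_states_stmt_7 {A B : Type}
    [Fintype A] [TopologicalSpace A] [DiscreteTopology A] [MeasurableSpace A] [BorelSpace A]
    [Fintype B] [TopologicalSpace B] [DiscreteTopology B] [MeasurableSpace B] [BorelSpace B]
    (X : Set (ℕ → A)) (Y : Set (ℕ → B)) (hX : IsSubshift X) (hY : IsSubshift Y)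
    (π : A → B) (hπ : blockMap π '' X = Y)
    (a₁ a₂ : ℝ) (ha₁ : 0 < a₁) (ha₂ : 0 ≤ a₂)
    (φ : List A → ℝ) (hφ : Submult X φ)
    (μ : ProbabilityMeasure (ℕ → A)) :
    μ ∈ WEqSet2 X Y π (genPot φ) a₁ a₂ ↔
      ∃ ν : ProbabilityMeasure (ℕ → B), (ν : Measure (ℕ → B)) = pushM π μ ∧
        ν ∈ EqSet Y (scPot (a₁ + a₂)⁻¹ (genPot (phiTwo X π φ a₁))) ∧
        μ ∈ CondEqSet X π (scPot a₁⁻¹ (genPot φ)) (ν : Measure (ℕ → B)) := by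
  exact main_aux X Y hX hY π hπ a₁ a₂ ha₁ ha₂ φ hφ μ
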